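/- arXiv:0907.1116 — 2 statements merged into one kernel-verified Lean document; each statement's English description precedes it below -/
import Mathlib

section
/- Let q ≥ 2 be an integer, 0 < H < 1 − 1/(2q), let c_{1,q,H} > 0 be the constant for which Z_n := V_n/(c_{1,q,H} √n) converges in law to N(0,1), and let N be a standard normal random variable. Then for every c > 0, (1/(−log(cε))) · [ Σ_{n≥1} (1/n) P(|Z_n| > c ε √n) − Σ_{n≥1} (1/n) P(|N| > c ε √n) ] converges to 0 as ε → 0⁺. -/
open MeasureTheory ProbabilityTheory Filter Real Topology

/-- A (centered) fractional Brownian motion with Hurst parameter `H`: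
all finite-dimensional distributions are centered Gaussian (equivalently, every finite
linear combination of values of the process is a centered real Gaussian), with covariance
`E (B s * B t) = (s^(2H) + t^(2H) - |t-s|^(2H)) / 2` for nonnegative times. -/
structure IsFractionalBrownianMotion {Ω : Type*} [MeasureSpace Ω]
    (B : ℝ → Ω → ℝ) (H : ℝ) : Prop where
  measurable : ∀ t : ℝ, Measurable (B t)
  gaussian_fdd : ∀ (n : ℕ) (t : Fin n → ℝ), (∀ i, 0 ≤ t i) → ∀ c : Fin n → ℝ,
    ∃ v : NNReal,
      Measure.map (fun ω => ∑ i, c i * B (t i) ω) (ℙ : Measure Ω) = gaussianReal 0 v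
  covariance : ∀ s t : ℝ, 0 ≤ s → 0 ≤ t →
    ∫ ω, B s ω * B t ω ∂(ℙ : Measure Ω)
      = (s ^ (2 * H) + t ^ (2 * H) - |t - s| ^ (2 * H)) / 2

/-- `V_n = ∑_{k=0}^{n-1} H_q (n^H (B_{(k+1)/n} - B_{k/n}))`, where `H_q` is the Hermite
polynomial of degree `q`. -/
noncomputable def hermiteVariation {Ω : Type*} [MeasureSpace Ω]
    (B : ℝ → Ω → ℝ) (H : ℝ) (q n : ℕ) (ω : Ω) : ℝ :=
  ∑ k ∈ Finset.range n,
    Polynomial.aeval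
      ((n : ℝ) ^ H * (B (((k : ℝ) + 1) / n) ω - B ((k : ℝ) / n) ω))
      (Polynomial.hermite q)

/-- Convergence in distribution of a sequence of real random variables to a law `μ`. -/
def TendstoInDistribution {Ω : Type*} [MeasureSpace Ω]
    (Z : ℕ → Ω → ℝ) (μ : Measure ℝ) : Prop :=
  ∀ f : BoundedContinuousFunction ℝ ℝ,
    Tendsto (fun n => ∫ ω, f (Z n ω) ∂(ℙ : Measure Ω)) atTop (𝓝 (∫ x, f x ∂μ))

/-! For standard, jointly Gaussian `X` and `Y`, Gaussian integration by parts gives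
`E (H_q X * H_q Y) = q! * cov(X, Y) ^ q`. The autocovariances of the increments of `B` are, up to
scaling, second differences of `r ↦ r ^ (2H)`, which have constant sign for `r ≥ 1`, so their
absolute values telescope and `E (V_n ^ 2) = O (n ^ (1 + a))` with `a = max (2H - 1) 0 < 1`. By
Chebyshev's inequality both tail probabilities at `ε √n` are `O (n ^ (a - 1) ε ^ (-2))`, and hence
the terms with `n > ε ^ (-4 / (1 - a))` contribute only `O (1)`. Below this cutoff the weights
`1 / n` sum to `O (-log ε)`, while the differences of tail probabilities tend to `0` uniformly in
the threshold by Pólya's theorem, so their weighted sum is `o (log ε)`. -/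

section GaussianPolynomials

open Polynomial

variable {Ω : Type*} {mΩ : MeasurableSpace Ω} {μ : Measure Ω} {X Y : Ω → ℝ}

lemma integrable_polynomial_eval [IsFiniteMeasure μ] (hX : ∀ n : ℕ, MemLp X n μ) (p : ℝ[X]) :
    Integrable (fun ω => p.eval (X ω)) μ := by
  induction p using Polynomial.induction_on' with
  | add p r hp hr => simpa only [eval_add] using! hp.add hr
  | monomial n a =>
    have hpow : Integrable (fun ω => X ω ^ n) μ := by
      refine (integrable_norm_iff ((hX n).aestronglyMeasurable.pow n)).1 ?_
      simpa only [Pi.pow_apply, norm_pow] using (hX n).integrable_norm_pow'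
    simpa only [eval_monomial] using hpow.const_mul a

lemma memLp_two_polynomial_eval [IsFiniteMeasure μ] (hX : ∀ n : ℕ, MemLp X n μ) (p : ℝ[X]) :
    MemLp (fun ω => p.eval (X ω)) 2 μ := by
  have hmeas : AEStronglyMeasurable (fun ω => p.eval (X ω)) μ :=
    (integrable_polynomial_eval hX p).aestronglyMeasurable
  rw [memLp_two_iff_integrable_sq hmeas]
  simpa only [← eval_pow] using integrable_polynomial_eval hX (p ^ 2)

lemma integrable_polynomial_eval_mul [IsFiniteMeasure μ] (hX : ∀ n : ℕ, MemLp X n μ)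
    (hY : ∀ n : ℕ, MemLp Y n μ) (p r : ℝ[X]) :
    Integrable (fun ω => p.eval (X ω) * r.eval (Y ω)) μ :=
  (memLp_two_polynomial_eval hX p).integrable_mul (memLp_two_polynomial_eval hY r)

lemma hasDerivAt_gaussianPDFReal_zero {v : NNReal} (hv : v ≠ 0) (x : ℝ) :
    HasDerivAt (gaussianPDFReal 0 v) (-(x / v) * gaussianPDFReal 0 v x) x := by
  have hv' : (v : ℝ) ≠ 0 := NNReal.coe_ne_zero.2 hv
  have hexponent : HasDerivAt (fun x : ℝ => -(x - 0) ^ 2 / (2 * v)) (-(x / v)) x := by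
    convert! (((hasDerivAt_id x).sub_const 0).pow 2).neg.div_const (2 * (v : ℝ)) using 1
    simp only [id_eq]
    field
  rw [gaussianPDFReal_def]
  convert! hexponent.exp.const_mul _ using 1
  ring

lemma integrable_gaussianReal_iff_integrable_smul {m : ℝ} {v : NNReal} (hv : v ≠ 0) {f : ℝ → ℝ} :
    Integrable f (gaussianReal m v) ↔ Integrable (fun x => gaussianPDFReal m v x * f x) := by
  rw [gaussianReal_of_var_ne_zero _ hv,
    integrable_withDensity_iff_integrable_smul' (by fun_prop) (by simp [gaussianPDF])]
  simp only [toReal_gaussianPDF, smul_eq_mul]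

lemma integral_mul_polynomial_eval_gaussianReal (v : NNReal) (p : ℝ[X]) :
    ∫ x, x * p.eval x ∂gaussianReal 0 v = v * ∫ x, p.derivative.eval x ∂gaussianReal 0 v := by
  rcases eq_or_ne v 0 with rfl | hv
  · simp
  have hint (r : ℝ[X]) : Integrable (fun x => gaussianPDFReal 0 v x * r.eval x) :=
    (integrable_gaussianReal_iff_integrable_smul hv).1
      (integrable_polynomial_eval (fun n => memLp_id_gaussianReal (n : NNReal)) r)
  have hderiv (x : ℝ) : HasDerivAt (fun x => gaussianPDFReal 0 v x * p.eval x)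
      (gaussianPDFReal 0 v x * (p.derivative - C (v : ℝ)⁻¹ * (X * p)).eval x) x := by
    convert! (hasDerivAt_gaussianPDFReal_zero hv x).mul (p.hasDerivAt x) using 1
    simp only [eval_sub, eval_mul, eval_C, eval_X]
    ring
  have hzero : ∫ x, (p.derivative - C (v : ℝ)⁻¹ * (X * p)).eval x ∂gaussianReal 0 v = 0 := by
    rw [integral_gaussianReal_eq_integral_smul hv]
    exact integral_eq_zero_of_hasDerivAt_of_integrable hderiv (hint _) (hint _)
  have hint' (r : ℝ[X]) : Integrable (fun x => r.eval x) (gaussianReal 0 v) :=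
    (integrable_gaussianReal_iff_integrable_smul hv).2 (hint r)
  simp only [eval_sub] at hzero
  rw [integral_sub (hint' _) (hint' _), sub_eq_zero] at hzero
  simp only [eval_mul, eval_C, eval_X, integral_const_mul] at hzero
  rw [hzero, mul_inv_cancel_left₀ (NNReal.coe_ne_zero.2 hv)]

lemma indepFun_sub_covariance_mul (hXY : HasGaussianLaw (fun ω => (X ω, Y ω)) μ)
    (hX : HasLaw X (gaussianReal 0 1) μ) :
    IndepFun X (fun ω => Y ω - cov[X, Y; μ] * X ω) μ := by
  have : IsProbabilityMeasure μ := hXY.isProbabilityMeasure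
  set ρ := cov[X, Y; μ] with hρ
  let L : ℝ × ℝ →L[ℝ] ℝ × ℝ := (ContinuousLinearMap.fst ℝ ℝ ℝ).prod
    (ContinuousLinearMap.snd ℝ ℝ ℝ - ρ • ContinuousLinearMap.fst ℝ ℝ ℝ)
  have hpair : HasGaussianLaw (fun ω => (X ω, Y ω - ρ * X ω)) μ := by
    simpa [L] using hXY.map_fun L
  refine hpair.indepFun_of_covariance_eq_zero ?_
  have hX2 : MemLp X 2 μ := hXY.fst.memLp_two
  have hvar : cov[X, X; μ] = 1 := by
    rw [covariance_self hX.aemeasurable, hX.variance_eq, variance_id_gaussianReal, NNReal.coe_one]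
  rw [covariance_fun_sub_right hX2 hXY.snd.memLp_two (hX2.const_mul ρ),
    covariance_const_mul_right, hvar, mul_one, hρ, sub_self]

/-- The disintegration of `(X, Y)` along the part `Y - ρ X` of `Y` that is independent of `X`. -/
lemma integral_comp_eq_integral_integral_gaussianReal
    (hXY : HasGaussianLaw (fun ω => (X ω, Y ω)) μ) (hX : HasLaw X (gaussianReal 0 1) μ)
    {F : ℝ → ℝ → ℝ} (hF : Continuous F.uncurry)
    (hint : Integrable (fun ω => F (X ω) (Y ω)) μ) :
    ∫ ω, F (X ω) (Y ω) ∂μ =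
      ∫ z, ∫ x, F x (cov[X, Y; μ] * x + z) ∂gaussianReal 0 1
        ∂μ.map (fun ω => Y ω - cov[X, Y; μ] * X ω) := by
  have : IsProbabilityMeasure μ := hXY.isProbabilityMeasure
  set ρ := cov[X, Y; μ]
  set ζ := μ.map fun ω => Y ω - ρ * X ω
  have hR : HasLaw (fun ω => Y ω - ρ * X ω) ζ μ :=
    ⟨hXY.snd.aemeasurable.sub (hX.aemeasurable.const_mul ρ), rfl⟩
  have : IsProbabilityMeasure ζ := Measure.isProbabilityMeasure_map hR.aemeasurable
  have hlaw := (indepFun_sub_covariance_mul hXY hX).hasLaw_prod hX hR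
  let G (p : ℝ × ℝ) : ℝ := F p.1 (ρ * p.1 + p.2)
  have hG : Continuous G :=
    hF.comp (by fun_prop : Continuous fun p : ℝ × ℝ => (p.1, ρ * p.1 + p.2))
  have hGcomp : (G ∘ fun ω => (X ω, Y ω - ρ * X ω)) = fun ω => F (X ω) (Y ω) := by
    ext ω
    simp [G]
  have hGint : Integrable G ((gaussianReal 0 1).prod ζ) := by
    rw [← hlaw.map_eq, integrable_map_measure hG.aestronglyMeasurable hlaw.aemeasurable, hGcomp]
    exact hint
  rw [← integral_prod_symm G hGint, ← hlaw.integral_comp hG.aestronglyMeasurable, hGcomp]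

lemma integral_mul_polynomial_eval_mul (hXY : HasGaussianLaw (fun ω => (X ω, Y ω)) μ)
    (hX : HasLaw X (gaussianReal 0 1) μ) (p r : ℝ[X]) :
    ∫ ω, X ω * p.eval (X ω) * r.eval (Y ω) ∂μ =
      ∫ ω, p.derivative.eval (X ω) * r.eval (Y ω) ∂μ +
        cov[X, Y; μ] * ∫ ω, p.eval (X ω) * r.derivative.eval (Y ω) ∂μ := by
  have : IsProbabilityMeasure μ := hXY.isProbabilityMeasure
  set ρ := cov[X, Y; μ] with hρ
  have hint (f g : ℝ[X]) : Integrable (fun ω => f.eval (X ω) * g.eval (Y ω)) μ :=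
    integrable_polynomial_eval_mul (fun n => hXY.fst.memLp (ENNReal.natCast_ne_top n))
      (fun n => hXY.snd.memLp (ENNReal.natCast_ne_top n)) f g
  have hleft := hint (Polynomial.X * p) r
  simp only [eval_mul, eval_X] at hleft
  have hright := (hint p.derivative r).add ((hint p r.derivative).const_mul ρ)
  rw [← integral_const_mul, ← integral_add (hint _ _) ((hint _ _).const_mul ρ),
    integral_comp_eq_integral_integral_gaussianReal hXY hX
      (F := fun x y => x * p.eval x * r.eval y) (by fun_prop) hleft,
    integral_comp_eq_integral_integral_gaussianReal hXY hX
      (F := fun x y => p.derivative.eval x * r.eval y + ρ * (p.eval x * r.derivative.eval y))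
      (by fun_prop) hright]
  congr with z
  have hparts := integral_mul_polynomial_eval_gaussianReal 1
    (p * r.comp (C ρ * Polynomial.X + C z))
  simpa [← hρ, derivative_comp, mul_assoc, mul_left_comm] using hparts

lemma integral_hermite_mul (hXY : HasGaussianLaw (fun ω => (X ω, Y ω)) μ)
    (hX : HasLaw X (gaussianReal 0 1) μ) (q : ℕ) (r : ℝ[X]) :
    ∫ ω, aeval (X ω) (hermite q) * r.eval (Y ω) ∂μ =
      cov[X, Y; μ] ^ q * ∫ ω, (derivative^[q] r).eval (Y ω) ∂μ := by
  have : IsProbabilityMeasure μ := hXY.isProbabilityMeasure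
  have hXp (n : ℕ) : MemLp X n μ := hXY.fst.memLp (ENNReal.natCast_ne_top n)
  have hYp (n : ℕ) : MemLp Y n μ := hXY.snd.memLp (ENNReal.natCast_ne_top n)
  simp only [← eval_map_algebraMap]
  induction q generalizing r with
  | zero => simp
  | succ q ih =>
    set h : ℝ[X] := (hermite q).map (algebraMap ℤ ℝ)
    have hsucc : (hermite (q + 1)).map (algebraMap ℤ ℝ) = Polynomial.X * h - derivative h := by
      simp [h, hermite_succ, derivative_map]
    have hint := integrable_polynomial_eval_mul hXp hYp (Polynomial.X * h) r
    simp only [eval_mul, eval_X] at hint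
    have hparts := integral_mul_polynomial_eval_mul hXY hX h r
    rw [← sub_eq_iff_eq_add', ← integral_sub hint (integrable_polynomial_eval_mul hXp hYp _ _),
      ih] at hparts
    simp only [hsucc, eval_sub, eval_mul, eval_X, sub_mul, hparts, Function.iterate_succ_apply]
    ring

lemma iterate_derivative_hermite (q : ℕ) : derivative^[q] (hermite q) = C (q.factorial : ℤ) := by
  ext k
  rw [coeff_iterate_derivative, coeff_C]
  split_ifs with hk
  · simp [hk, Nat.descFactorial_self, coeff_hermite_self]
  · rw [coeff_hermite_of_lt (by lia), smul_zero]

lemma integral_hermite_mul_hermite (hXY : HasGaussianLaw (fun ω => (X ω, Y ω)) μ)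
    (hX : HasLaw X (gaussianReal 0 1) μ) (q : ℕ) :
    ∫ ω, aeval (X ω) (hermite q) * aeval (Y ω) (hermite q) ∂μ =
      q.factorial * cov[X, Y; μ] ^ q := by
  have : IsProbabilityMeasure μ := hXY.isProbabilityMeasure
  have h := integral_hermite_mul hXY hX q ((hermite q).map (algebraMap ℤ ℝ))
  rw [iterate_derivative_map, iterate_derivative_hermite] at h
  simpa only [eval_map_algebraMap, map_C, eval_C, integral_const, probReal_univ, one_smul,
    map_natCast, mul_comm] using h

end GaussianPolynomials

section FractionalGaussianNoise

lemma sum_range_abs_sub_eq_abs_sub {d : ℕ → ℝ} (hd : Monotone d ∨ Antitone d) (n : ℕ) :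
    ∑ i ∈ Finset.range n, |d (i + 1) - d i| = |d n - d 0| := by
  rcases hd with hd | hd
  · rw [abs_of_nonneg (sub_nonneg.2 (hd n.zero_le)), ← Finset.sum_range_sub]
    exact Finset.sum_congr rfl fun i _ => abs_of_nonneg (sub_nonneg.2 (hd i.le_succ))
  · rw [abs_of_nonpos (sub_nonpos.2 (hd n.zero_le)), ← Finset.sum_range_sub,
      ← Finset.sum_neg_distrib]
    exact Finset.sum_congr rfl fun i _ => abs_of_nonpos (sub_nonpos.2 (hd i.le_succ))

lemma monotone_sub_natCast_of_convexOn {f : ℝ → ℝ} (hf : ConvexOn ℝ (Set.Ici 0) f) :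
    Monotone fun i : ℕ => f (i + 1) - f i := by
  refine monotone_nat_of_le_succ fun i => ?_
  have hmid := hf.2 (Set.mem_Ici.2 i.cast_nonneg)
    (Set.mem_Ici.2 (by positivity : (0 : ℝ) ≤ i + 2)) one_half_pos.le one_half_pos.le
    (add_halves 1)
  simp only [smul_eq_mul] at hmid
  push_cast
  rw [show (i : ℝ) + 1 + 1 = i + 2 by ring]
  rw [show (1 / 2 : ℝ) * i + 1 / 2 * (i + 2) = i + 1 by ring] at hmid
  linarith

lemma antitone_sub_natCast_of_concaveOn {f : ℝ → ℝ} (hf : ConcaveOn ℝ (Set.Ici 0) f) :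
    Antitone fun i : ℕ => f (i + 1) - f i := by
  convert! (monotone_sub_natCast_of_convexOn hf.neg).neg using 2 with i
  simp only [Pi.neg_apply]
  ring

lemma monotone_or_antitone_rpow_sub_rpow {p : ℝ} (hp : 0 ≤ p) :
    (Monotone fun i : ℕ => ((i : ℝ) + 1) ^ p - (i : ℝ) ^ p) ∨
      Antitone fun i : ℕ => ((i : ℝ) + 1) ^ p - (i : ℝ) ^ p :=
  (le_total 1 p).imp (fun h => monotone_sub_natCast_of_convexOn (convexOn_rpow h))
    fun h => antitone_sub_natCast_of_concaveOn (Real.concaveOn_rpow hp h)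

lemma add_one_rpow_sub_rpow_le {x p : ℝ} (hx : 0 ≤ x) (hp : 1 ≤ p) :
    (x + 1) ^ p - x ^ p ≤ p * (x + 1) ^ (p - 1) := by
  have hx1 : 0 < x + 1 := by linarith
  have bernoulli : 1 + p * (-1 / (x + 1)) ≤ (1 + -1 / (x + 1)) ^ p :=
    one_add_mul_self_le_rpow_one_add (by rw [le_div_iff₀ hx1]; linarith) hp
  rw [show 1 + -1 / (x + 1) = x / (x + 1) by field, Real.div_rpow hx hx1.le,
    le_div_iff₀ (by positivity)] at bernoulli
  rw [Real.rpow_sub_one hx1.ne']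
  calc (x + 1) ^ p - x ^ p
      ≤ (x + 1) ^ p - (1 + p * (-1 / (x + 1))) * (x + 1) ^ p := sub_le_sub_left bernoulli _
    _ = p * ((x + 1) ^ p / (x + 1)) := by ring

lemma natCast_add_one_rpow_sub_rpow_le {p : ℝ} (hp0 : 0 < p) (hp2 : p ≤ 2) (k : ℕ) :
    ((k : ℝ) + 1) ^ p - (k : ℝ) ^ p ≤ 2 * ((k : ℝ) + 1) ^ max (p - 1) 0 := by
  rcases le_total 1 p with h | h
  · rw [max_eq_left (by linarith)]
    refine (add_one_rpow_sub_rpow_le k.cast_nonneg h).trans ?_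
    gcongr
  · have hanti := antitone_sub_natCast_of_concaveOn (Real.concaveOn_rpow hp0.le h) k.zero_le
    rw [max_eq_right (by linarith), Real.rpow_zero]
    simp only [Nat.cast_zero, zero_add, Real.one_rpow, Real.zero_rpow hp0.ne'] at hanti
    linarith

/-- The autocovariance function of fractional Gaussian noise, that is, of the unit-step increments
of a fractional Brownian motion with Hurst parameter `H`, at lag `r`. -/
noncomputable def fgnAutocov (H r : ℝ) : ℝ :=
  (|r + 1| ^ (2 * H) + |r - 1| ^ (2 * H) - 2 * |r| ^ (2 * H)) / 2

variable {H : ℝ}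

lemma fgnAutocov_zero (hH : H ≠ 0) : fgnAutocov H 0 = 1 := by
  simp [fgnAutocov, Real.zero_rpow (mul_ne_zero two_ne_zero hH)]

lemma fgnAutocov_neg (H r : ℝ) : fgnAutocov H (-r) = fgnAutocov H r := by
  rw [fgnAutocov, fgnAutocov, abs_neg, show -r + 1 = -(r - 1) by ring,
    show -r - 1 = -(r + 1) by ring, abs_neg, abs_neg]
  ring

lemma fgnAutocov_natCast_add_one (H : ℝ) (i : ℕ) :
    fgnAutocov H ((i + 1 : ℕ) : ℝ) =
      (((((i + 1 : ℕ) : ℝ) + 1) ^ (2 * H) - ((i + 1 : ℕ) : ℝ) ^ (2 * H)) -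
        (((i : ℝ) + 1) ^ (2 * H) - (i : ℝ) ^ (2 * H))) / 2 := by
  push_cast
  rw [fgnAutocov, add_sub_cancel_right, abs_of_nonneg (by positivity),
    abs_of_nonneg (by positivity), abs_of_nonneg (by positivity)]
  ring

lemma sum_abs_fgnAutocov_le (hH0 : 0 < H) (hH1 : H ≤ 1) {n : ℕ} (hn : n ≠ 0) :
    ∑ r ∈ Finset.range n, |fgnAutocov H r| ≤ 2 * (n : ℝ) ^ max (2 * H - 1) 0 := by
  obtain ⟨k, rfl⟩ := Nat.exists_eq_succ_of_ne_zero hn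
  have hp : 0 < 2 * H := by positivity
  have hstep_nonneg : 0 ≤ ((k : ℝ) + 1) ^ (2 * H) - (k : ℝ) ^ (2 * H) :=
    sub_nonneg.2 (Real.rpow_le_rpow k.cast_nonneg (by linarith) hp.le)
  have hstep_le := natCast_add_one_rpow_sub_rpow_le hp (by linarith) k
  have hpow : 1 ≤ ((k : ℝ) + 1) ^ max (2 * H - 1) 0 :=
    Real.one_le_rpow (by linarith [(k.cast_nonneg : (0 : ℝ) ≤ k)]) (le_max_right _ _)
  have htelescope : ∑ i ∈ Finset.range k, |fgnAutocov H ((i + 1 : ℕ) : ℝ)| =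
      |((k : ℝ) + 1) ^ (2 * H) - (k : ℝ) ^ (2 * H) - 1| / 2 := by
    have h := sum_range_abs_sub_eq_abs_sub (monotone_or_antitone_rpow_sub_rpow hp.le) k
    simp only [Nat.cast_zero, zero_add, Real.one_rpow, Real.zero_rpow hp.ne', sub_zero] at h
    simp only [fgnAutocov_natCast_add_one, abs_div, abs_two, ← Finset.sum_div, h]
  rw [Finset.sum_range_succ', htelescope, Nat.cast_zero, fgnAutocov_zero hH0.ne', abs_one,
    Nat.succ_eq_add_one, Nat.cast_add_one]
  have habs : |((k : ℝ) + 1) ^ (2 * H) - (k : ℝ) ^ (2 * H) - 1| ≤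
      2 * ((k : ℝ) + 1) ^ max (2 * H - 1) 0 := abs_le.2 ⟨by linarith, by linarith⟩
  linarith

lemma sum_natCast_sub_le {f : ℝ → ℝ} (hf : ∀ r, 0 ≤ f r) (heven : ∀ r, f (-r) = f r) {n k : ℕ}
    (hk : k < n) :
    ∑ l ∈ Finset.range n, f (k - l) ≤ 2 * ∑ r ∈ Finset.range n, f r := by
  have hbelow : ∑ l ∈ Finset.range k, f (k - l) ≤ ∑ r ∈ Finset.range n, f r := by
    calc ∑ l ∈ Finset.range k, f (k - l)
        = ∑ l ∈ Finset.range k, f ((l + 1 : ℕ) : ℝ) := by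
          rw [← Finset.sum_range_reflect]
          refine Finset.sum_congr rfl fun l hl => ?_
          rw [← Nat.cast_sub (by lia)]
          congr 2
          have := Finset.mem_range.1 hl
          lia
      _ ≤ ∑ r ∈ Finset.range (k + 1), f r := by
          rw [Finset.sum_range_succ' _ k]
          exact le_add_of_nonneg_right (hf _)
      _ ≤ ∑ r ∈ Finset.range n, f r :=
          Finset.sum_le_sum_of_subset_of_nonneg (Finset.range_subset_range.2 hk) fun _ _ _ => hf _
  have habove : ∑ l ∈ Finset.Ico k n, f (k - l) ≤ ∑ r ∈ Finset.range n, f r := by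
    calc ∑ l ∈ Finset.Ico k n, f (k - l)
        = ∑ l ∈ Finset.range (n - k), f l := by
          rw [Finset.sum_Ico_eq_sum_range]
          refine Finset.sum_congr rfl fun l _ => ?_
          rw [Nat.cast_add, sub_add_cancel_left, heven]
      _ ≤ ∑ r ∈ Finset.range n, f r :=
          Finset.sum_le_sum_of_subset_of_nonneg (Finset.range_subset_range.2 (n.sub_le k))
            fun _ _ _ => hf _
  rw [← Finset.sum_range_add_sum_Ico _ hk.le]
  linarith

lemma sum_sum_natCast_sub_le {f : ℝ → ℝ} (hf : ∀ r, 0 ≤ f r) (heven : ∀ r, f (-r) = f r) (n : ℕ) :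
    ∑ k ∈ Finset.range n, ∑ l ∈ Finset.range n, f (k - l) ≤
      2 * n * ∑ r ∈ Finset.range n, f r := by
  calc ∑ k ∈ Finset.range n, ∑ l ∈ Finset.range n, f (k - l)
      ≤ ∑ k ∈ Finset.range n, 2 * ∑ r ∈ Finset.range n, f r :=
        Finset.sum_le_sum fun k hk => sum_natCast_sub_le hf heven (Finset.mem_range.1 hk)
    _ = 2 * n * ∑ r ∈ Finset.range n, f r := by
        rw [Finset.sum_const, Finset.card_range, nsmul_eq_mul]
        ring

end FractionalGaussianNoise

section FractionalBrownianMotion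

lemma abs_covariance_le {Ω : Type*} {mΩ : MeasurableSpace Ω} {μ : Measure Ω} [IsFiniteMeasure μ]
    {X Y : Ω → ℝ} (hX : MemLp X 2 μ) (hY : MemLp Y 2 μ) :
    |cov[X, Y; μ]| ≤ (Var[X; μ] + Var[Y; μ]) / 2 := by
  have hadd := variance_nonneg (X + Y) μ
  have hsub := variance_nonneg (X - Y) μ
  rw [variance_add hX hY] at hadd
  rw [variance_sub hX hY] at hsub
  exact abs_le.2 ⟨by linarith, by linarith⟩

variable {Ω : Type*} [MeasureSpace Ω] {B : ℝ → Ω → ℝ} {H : ℝ}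

/-- The increment of `B` over `[k / n, (k + 1) / n]`, normalised to have unit variance when `B` is
a fractional Brownian motion with Hurst parameter `H`. -/
noncomputable def scaledIncrement (B : ℝ → Ω → ℝ) (H : ℝ) (n k : ℕ) (ω : Ω) : ℝ :=
  (n : ℝ) ^ H * (B (((k : ℝ) + 1) / n) ω - B ((k : ℝ) / n) ω)

namespace IsFractionalBrownianMotion

lemma hasGaussianLaw_pi (hB : IsFractionalBrownianMotion B H) {n : ℕ} {t : Fin n → ℝ}
    (ht : ∀ i, 0 ≤ t i) : HasGaussianLaw (fun ω i => B (t i) ω) ℙ := by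
  have hmeas (s : ℝ) : Measurable (B s) := hB.measurable s
  refine ⟨isGaussian_of_map_eq_gaussianReal fun L => ?_⟩
  obtain ⟨v, hv⟩ := hB.gaussian_fdd n t ht fun i => L (Pi.single i 1)
  refine ⟨0, v, ?_⟩
  rw [Measure.map_map (by fun_prop) (by fun_prop), ← hv]
  refine congrArg (fun f => Measure.map f ℙ) (funext fun ω => ?_)
  rw [Function.comp_apply, pi_eq_sum_univ' (fun i => B (t i) ω), map_sum]
  simp only [map_smul, smul_eq_mul, mul_comm]

lemma hasGaussianLaw (hB : IsFractionalBrownianMotion B H) {t : ℝ} (ht : 0 ≤ t) :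
    HasGaussianLaw (B t) ℙ :=
  (hB.hasGaussianLaw_pi (t := fun _ : Fin 1 => t) fun _ => ht).eval 0

lemma integral_eq_zero (hB : IsFractionalBrownianMotion B H) {t : ℝ} (ht : 0 ≤ t) :
    ∫ ω, B t ω = 0 := by
  obtain ⟨v, hv⟩ := hB.gaussian_fdd 1 (fun _ => t) (fun _ => ht) fun _ => 1
  simp only [Finset.univ_unique, one_mul, Finset.sum_const, Finset.card_singleton, one_smul] at hv
  have hlaw : HasLaw (B t) (gaussianReal 0 v) ℙ := ⟨(hB.measurable t).aemeasurable, hv⟩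
  rw [hlaw.integral_eq, integral_id_gaussianReal]

lemma covariance_eq (hB : IsFractionalBrownianMotion B H) {s t : ℝ} (hs : 0 ≤ s) (ht : 0 ≤ t) :
    cov[B s, B t] = (s ^ (2 * H) + t ^ (2 * H) - |t - s| ^ (2 * H)) / 2 := by
  have : IsProbabilityMeasure (ℙ : Measure Ω) := (hB.hasGaussianLaw hs).isProbabilityMeasure
  rw [covariance_eq_sub (hB.hasGaussianLaw hs).memLp_two (hB.hasGaussianLaw ht).memLp_two,
    hB.integral_eq_zero hs, zero_mul, sub_zero]
  exact hB.covariance s t hs ht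

lemma covariance_sub_sub (hB : IsFractionalBrownianMotion B H) {s t u v : ℝ} (hs : 0 ≤ s)
    (ht : 0 ≤ t) (hu : 0 ≤ u) (hv : 0 ≤ v) :
    cov[B t - B s, B v - B u] =
      (|v - s| ^ (2 * H) + |u - t| ^ (2 * H) - |v - t| ^ (2 * H) - |u - s| ^ (2 * H)) / 2 := by
  have : IsProbabilityMeasure (ℙ : Measure Ω) := (hB.hasGaussianLaw hs).isProbabilityMeasure
  have hs2 := (hB.hasGaussianLaw hs).memLp_two
  have ht2 := (hB.hasGaussianLaw ht).memLp_two
  have hu2 := (hB.hasGaussianLaw hu).memLp_two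
  have hv2 := (hB.hasGaussianLaw hv).memLp_two
  rw [covariance_sub_left ht2 hs2 (hv2.sub hu2), covariance_sub_right ht2 hv2 hu2,
    covariance_sub_right hs2 hv2 hu2, hB.covariance_eq ht hv, hB.covariance_eq ht hu,
    hB.covariance_eq hs hv, hB.covariance_eq hs hu]
  ring

lemma covariance_scaledIncrement (hB : IsFractionalBrownianMotion B H) {n : ℕ} (hn : n ≠ 0)
    (k l : ℕ) :
    cov[scaledIncrement B H n k, scaledIncrement B H n l] = fgnAutocov H (k - l) := by
  have hn' : (0 : ℝ) < n := by positivity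
  have hrpow (x : ℝ) : |x / n| ^ (2 * H) = |x| ^ (2 * H) / (n : ℝ) ^ (2 * H) := by
    rw [abs_div, abs_of_pos hn', Real.div_rpow (abs_nonneg x) hn'.le]
  have hcov := hB.covariance_sub_sub (s := k / n) (t := (k + 1) / n) (u := l / n)
    (v := (l + 1) / n) (by positivity) (by positivity) (by positivity) (by positivity)
  simp only [← sub_div, hrpow] at hcov
  rw [show (l : ℝ) + 1 - k = -(k - l - 1) by ring, show (l : ℝ) - (k + 1) = -(k - l + 1) by ring,
    show (l : ℝ) + 1 - (k + 1) = -(k - l) by ring, show (l : ℝ) - k = -(k - l) by ring] at hcov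
  simp only [abs_neg] at hcov
  have hscale : (n : ℝ) ^ (2 * H) = (n : ℝ) ^ H * (n : ℝ) ^ H := by
    rw [two_mul, Real.rpow_add hn']
  change cov[fun ω => (n : ℝ) ^ H * (B ((k + 1) / n) - B (k / n)) ω,
    fun ω => (n : ℝ) ^ H * (B ((l + 1) / n) - B (l / n)) ω] = _
  rw [covariance_const_mul_left, covariance_const_mul_right, hcov, fgnAutocov, hscale]
  have : (n : ℝ) ^ H ≠ 0 := (Real.rpow_pos_of_pos hn' H).ne'
  field

lemma hasGaussianLaw_scaledIncrement_prodMk (hB : IsFractionalBrownianMotion B H) (n k l : ℕ) :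
    HasGaussianLaw (fun ω => (scaledIncrement B H n k ω, scaledIncrement B H n l ω)) ℙ := by
  have hpi := hB.hasGaussianLaw_pi (t := ![(k + 1) / n, k / n, (l + 1) / n, l / n])
    (by simp only [Fin.forall_fin_succ]; simpa using by constructorm* _ ∧ _ <;> positivity)
  let x (i : Fin 4) : (Fin 4 → ℝ) →L[ℝ] ℝ := ContinuousLinearMap.proj i
  simpa [x, scaledIncrement] using
    hpi.map_fun (((n : ℝ) ^ H • (x 0 - x 1)).prod ((n : ℝ) ^ H • (x 2 - x 3)))

lemma hasLaw_scaledIncrement (hB : IsFractionalBrownianMotion B H) (hH : H ≠ 0) {n : ℕ}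
    (hn : n ≠ 0) (k : ℕ) : HasLaw (scaledIncrement B H n k) (gaussianReal 0 1) ℙ := by
  have hgauss := (hB.hasGaussianLaw_scaledIncrement_prodMk n k k).fst
  have : IsProbabilityMeasure (ℙ : Measure Ω) := hgauss.isProbabilityMeasure
  have hvar : Var[scaledIncrement B H n k] = 1 := by
    rw [← covariance_self hgauss.aemeasurable, hB.covariance_scaledIncrement hn, sub_self,
      fgnAutocov_zero hH]
  have hmean : ∫ ω, scaledIncrement B H n k ω = 0 := by
    have hk : (0 : ℝ) ≤ k / n := by positivity
    have hk1 : (0 : ℝ) ≤ (k + 1) / n := by positivity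
    simp only [scaledIncrement]
    rw [integral_const_mul, integral_sub (hB.hasGaussianLaw hk1).integrable
      (hB.hasGaussianLaw hk).integrable, hB.integral_eq_zero hk1, hB.integral_eq_zero hk, sub_zero,
      mul_zero]
  refine ⟨hgauss.aemeasurable, ?_⟩
  rw [hgauss.map_eq_gaussianReal, hvar, hmean, Real.toNNReal_one]

lemma abs_fgnAutocov_natCast_sub_le_one (hB : IsFractionalBrownianMotion B H) (hH : H ≠ 0)
    (k l : ℕ) : |fgnAutocov H (k - l)| ≤ 1 := by
  have hvar (j : ℕ) : Var[scaledIncrement B H 1 j] = 1 := by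
    rw [(hB.hasLaw_scaledIncrement hH one_ne_zero j).variance_eq, variance_id_gaussianReal,
      NNReal.coe_one]
  have hpair := hB.hasGaussianLaw_scaledIncrement_prodMk 1 k l
  have : IsProbabilityMeasure (ℙ : Measure Ω) := hpair.isProbabilityMeasure
  have hle := abs_covariance_le hpair.fst.memLp_two hpair.snd.memLp_two
  rwa [hB.covariance_scaledIncrement one_ne_zero, hvar, hvar, add_self_div_two] at hle

lemma memLp_two_hermite_scaledIncrement (hB : IsFractionalBrownianMotion B H) (q n k : ℕ) :
    MemLp (fun ω => Polynomial.aeval (scaledIncrement B H n k ω) (Polynomial.hermite q)) 2 ℙ := by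
  have hgauss := (hB.hasGaussianLaw_scaledIncrement_prodMk n k k).fst
  have : IsProbabilityMeasure (ℙ : Measure Ω) := hgauss.isProbabilityMeasure
  simp only [← Polynomial.eval_map_algebraMap]
  exact memLp_two_polynomial_eval (fun m => hgauss.memLp (ENNReal.natCast_ne_top m)) _

lemma memLp_two_hermiteVariation (hB : IsFractionalBrownianMotion B H) (q n : ℕ) :
    MemLp (hermiteVariation B H q n) 2 ℙ :=
  memLp_finsetSum _ fun k _ => hB.memLp_two_hermite_scaledIncrement q n k

lemma integral_hermiteVariation_sq (hB : IsFractionalBrownianMotion B H) (hH : H ≠ 0) (q : ℕ)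
    {n : ℕ} (hn : n ≠ 0) :
    ∫ ω, hermiteVariation B H q n ω ^ 2 =
      q.factorial * ∑ k ∈ Finset.range n, ∑ l ∈ Finset.range n, fgnAutocov H (k - l) ^ q := by
  have hint (k l : ℕ) : Integrable fun ω =>
      Polynomial.aeval (scaledIncrement B H n k ω) (Polynomial.hermite q) *
        Polynomial.aeval (scaledIncrement B H n l ω) (Polynomial.hermite q) :=
    (hB.memLp_two_hermite_scaledIncrement q n k).integrable_mul
      (hB.memLp_two_hermite_scaledIncrement q n l)
  calc ∫ ω, hermiteVariation B H q n ω ^ 2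
      = ∫ ω, ∑ k ∈ Finset.range n, ∑ l ∈ Finset.range n,
          Polynomial.aeval (scaledIncrement B H n k ω) (Polynomial.hermite q) *
            Polynomial.aeval (scaledIncrement B H n l ω) (Polynomial.hermite q) := by
        simp only [sq, hermiteVariation, Finset.sum_mul_sum, scaledIncrement]
    _ = ∑ k ∈ Finset.range n, ∑ l ∈ Finset.range n, ∫ ω,
          Polynomial.aeval (scaledIncrement B H n k ω) (Polynomial.hermite q) *
            Polynomial.aeval (scaledIncrement B H n l ω) (Polynomial.hermite q) := by
        rw [integral_finsetSum _ fun k _ => integrable_finsetSum _ fun l _ => hint k l]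
        exact Finset.sum_congr rfl fun k _ => integral_finsetSum _ fun l _ => hint k l
    _ = q.factorial * ∑ k ∈ Finset.range n, ∑ l ∈ Finset.range n, fgnAutocov H (k - l) ^ q := by
        simp only [integral_hermite_mul_hermite (hB.hasGaussianLaw_scaledIncrement_prodMk n _ _)
          (hB.hasLaw_scaledIncrement hH hn _), hB.covariance_scaledIncrement hn, Finset.mul_sum]

lemma integral_hermiteVariation_sq_le (hB : IsFractionalBrownianMotion B H) (hH0 : 0 < H)
    (hH1 : H ≤ 1) {q n : ℕ} (hq : q ≠ 0) (hn : n ≠ 0) :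
    ∫ ω, hermiteVariation B H q n ω ^ 2 ≤
      4 * q.factorial * (n * (n : ℝ) ^ max (2 * H - 1) 0) := by
  have hpow (k l : ℕ) : fgnAutocov H (k - l) ^ q ≤ |fgnAutocov H (k - l)| :=
    calc fgnAutocov H (k - l) ^ q ≤ |fgnAutocov H (k - l)| ^ q := by
          rw [← abs_pow]
          exact le_abs_self _
      _ ≤ |fgnAutocov H (k - l)| :=
          pow_le_of_le_one (abs_nonneg _) (hB.abs_fgnAutocov_natCast_sub_le_one hH0.ne' k l) hq
  calc ∫ ω, hermiteVariation B H q n ω ^ 2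
      = q.factorial * ∑ k ∈ Finset.range n, ∑ l ∈ Finset.range n, fgnAutocov H (k - l) ^ q :=
        hB.integral_hermiteVariation_sq hH0.ne' q hn
    _ ≤ q.factorial * ∑ k ∈ Finset.range n, ∑ l ∈ Finset.range n, |fgnAutocov H (k - l)| := by
        gcongr
        exact hpow _ _
    _ ≤ q.factorial * (2 * n * ∑ r ∈ Finset.range n, |fgnAutocov H r|) := by
        gcongr
        exact sum_sum_natCast_sub_le (f := fun r => |fgnAutocov H r|) (fun _ => abs_nonneg _)
          (fun r => by rw [fgnAutocov_neg]) n
    _ ≤ q.factorial * (2 * n * (2 * (n : ℝ) ^ max (2 * H - 1) 0)) := by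
        gcongr
        exact sum_abs_fgnAutocov_le hH0 hH1 hn
    _ = 4 * q.factorial * (n * (n : ℝ) ^ max (2 * H - 1) 0) := by ring

lemma integral_hermiteVariation_div_sq_le (hB : IsFractionalBrownianMotion B H) (hH0 : 0 < H)
    (hH1 : H ≤ 1) {q : ℕ} (hq : q ≠ 0) {c₁ : ℝ} (hc₁ : c₁ ≠ 0) (n : ℕ) :
    ∫ ω, (hermiteVariation B H q (n + 1) ω / (c₁ * √((n : ℝ) + 1))) ^ 2 ≤
      4 * q.factorial / c₁ ^ 2 * ((n : ℝ) + 1) ^ max (2 * H - 1) 0 := by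
  have hn : (0 : ℝ) < n + 1 := by positivity
  have hV := hB.integral_hermiteVariation_sq_le hH0 hH1 hq n.succ_ne_zero
  push_cast at hV
  simp only [div_pow, mul_pow, Real.sq_sqrt hn.le, integral_div]
  rw [div_le_iff₀ (by positivity)]
  refine hV.trans_eq ?_
  field

end IsFractionalBrownianMotion

end FractionalBrownianMotion

section UniformConvergence

variable {ι : Type*} {l : Filter ι} {F : ι → ℝ → ℝ} {f : ℝ → ℝ}

lemma tendstoLocallyUniformly_of_monotone (hF : ∀ i, Monotone (F i)) (hf : Continuous f)
    (hFf : ∀ x, Tendsto (F · x) l (𝓝 (f x))) : TendstoLocallyUniformly F f l := by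
  rw [Metric.tendstoLocallyUniformly_iff]
  intro ε hε x
  have hnear : {y | |f y - f x| < ε / 4} ∈ 𝓝 x :=
    Metric.continuousAt_iff'.1 hf.continuousAt (ε / 4) (by positivity)
  obtain ⟨a, b, hxab, hab, hsub⟩ := exists_Icc_mem_subset_of_mem_nhds hnear
  have hle : a ≤ b := hxab.1.trans hxab.2
  have hosc (y : ℝ) (hy : y ∈ Set.Icc a b) : |f y - f x| < ε / 4 := hsub hy
  refine ⟨Set.Icc a b, hab, ?_⟩
  filter_upwards [Metric.tendsto_nhds.1 (hFf a) (ε / 4) (by positivity),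
    Metric.tendsto_nhds.1 (hFf b) (ε / 4) (by positivity)] with i hia hib y hy
  have hfa := abs_lt.1 (hosc a (Set.left_mem_Icc.2 hle))
  have hfb := abs_lt.1 (hosc b (Set.right_mem_Icc.2 hle))
  have hfy := abs_lt.1 (hosc y hy)
  rw [Real.dist_eq, abs_lt] at hia hib
  have hay := hF i hy.1
  have hyb := hF i hy.2
  rw [Real.dist_eq, abs_lt]
  constructor <;> linarith

lemma eventually_forall_le_abs_sub_lt_of_tendsto_atBot {m ε : ℝ} (hF : ∀ i, Monotone (F i))
    (hFf : ∀ x, Tendsto (F · x) l (𝓝 (f x))) (hm : ∀ i x, m ≤ F i x)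
    (hbot : Tendsto f atBot (𝓝 m)) (hε : 0 < ε) :
    ∃ a, ∀ᶠ i in l, ∀ x ≤ a, |f x - F i x| < ε := by
  obtain ⟨a, ha⟩ := eventually_atBot.1 (Metric.tendsto_nhds.1 hbot (ε / 3) (by positivity))
  refine ⟨a, ?_⟩
  filter_upwards [Metric.tendsto_nhds.1 (hFf a) (ε / 3) (by positivity)] with i hia x hx
  have hfa := ha a le_rfl
  have hfx := ha x hx
  rw [Real.dist_eq, abs_lt] at hia hfa hfx
  have hxa := hF i hx
  have hmx := hm i x
  rw [abs_lt]
  constructor <;> linarith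

lemma eventually_forall_ge_abs_sub_lt_of_tendsto_atTop {M ε : ℝ} (hF : ∀ i, Monotone (F i))
    (hFf : ∀ x, Tendsto (F · x) l (𝓝 (f x))) (hM : ∀ i x, F i x ≤ M)
    (htop : Tendsto f atTop (𝓝 M)) (hε : 0 < ε) :
    ∃ b, ∀ᶠ i in l, ∀ x ≥ b, |f x - F i x| < ε := by
  obtain ⟨a, ha⟩ := eventually_forall_le_abs_sub_lt_of_tendsto_atBot
    (F := fun i x => -F i (-x)) (f := fun x => -f (-x))
    (fun i x y hxy => neg_le_neg (hF i (neg_le_neg hxy))) (fun x => (hFf (-x)).neg)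
    (fun i x => neg_le_neg (hM i (-x))) (htop.comp tendsto_neg_atBot_atTop).neg hε
  refine ⟨-a, ha.mono fun i hi x hx => ?_⟩
  have h := hi (-x) (neg_le.1 hx)
  rwa [neg_neg, neg_sub_neg, abs_sub_comm] at h

/-- **Pólya's theorem**, for monotone functions. -/
lemma tendstoUniformly_of_monotone {m M : ℝ} (hF : ∀ i, Monotone (F i)) (hf : Continuous f)
    (hFf : ∀ x, Tendsto (F · x) l (𝓝 (f x))) (hm : ∀ i x, m ≤ F i x) (hM : ∀ i x, F i x ≤ M)
    (hbot : Tendsto f atBot (𝓝 m)) (htop : Tendsto f atTop (𝓝 M)) : TendstoUniformly F f l := by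
  rw [Metric.tendstoUniformly_iff]
  intro ε hε
  obtain ⟨a, ha⟩ := eventually_forall_le_abs_sub_lt_of_tendsto_atBot hF hFf hm hbot hε
  obtain ⟨b, hb⟩ := eventually_forall_ge_abs_sub_lt_of_tendsto_atTop hF hFf hM htop hε
  have hab : TendstoUniformlyOn F f l (Set.Icc a b) :=
    (tendstoLocallyUniformlyOn_iff_tendstoUniformlyOn_of_compact isCompact_Icc).1
      (tendstoLocallyUniformly_of_monotone hF hf hFf).tendstoLocallyUniformlyOn
  filter_upwards [ha, hb, Metric.tendstoUniformlyOn_iff.1 hab ε hε] with i hia hib hiab x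
  rcases le_total x a with hx | hx
  · exact hia x hx
  rcases le_total b x with hx' | hx'
  · exact hib x hx'
  · exact hiab x ⟨hx, hx'⟩

lemma continuous_cdf (ν : Measure ℝ) [IsProbabilityMeasure ν] [NullSingletonClass ν] :
    Continuous (cdf ν) := by
  refine continuous_iff_continuousAt.2 fun x => ?_
  rw [(monotone_cdf ν).continuousAt_iff_leftLim_eq_rightLim, StieltjesFunction.rightLim_eq]
  have hjump : (cdf ν).measure {x} = 0 := by rw [measure_cdf, measure_singleton]
  rw [StieltjesFunction.measure_singleton, ENNReal.ofReal_eq_zero] at hjump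
  exact le_antisymm ((monotone_cdf ν).leftLim_le le_rfl) (sub_nonpos.1 hjump)

lemma tendstoUniformly_cdf {μ : ι → ProbabilityMeasure ℝ} {ν : ProbabilityMeasure ℝ}
    [NullSingletonClass (ν : Measure ℝ)] (h : Tendsto μ l (𝓝 ν)) :
    TendstoUniformly (fun i => cdf (μ i : Measure ℝ)) (cdf (ν : Measure ℝ)) l := by
  refine tendstoUniformly_of_monotone (fun i => monotone_cdf _) (continuous_cdf _) (fun x => ?_)
    (fun i => cdf_nonneg _) (fun i => cdf_le_one _) (tendsto_cdf_atBot _) (tendsto_cdf_atTop _)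
  simp only [cdf_eq_real]
  refine (ENNReal.tendsto_toReal (measure_ne_top _ _)).comp
    (ProbabilityMeasure.tendsto_measure_of_null_frontier_of_tendsto' h ?_)
  rw [frontier_Iic, measure_singleton]

end UniformConvergence

section LogarithmicAverages

open Asymptotics

lemma sum_range_one_div_add_one_le (n : ℕ) :
    ∑ k ∈ Finset.range n, 1 / ((k : ℝ) + 1) ≤ 1 + Real.log n := by
  simpa [harmonic] using harmonic_le_one_add_log n

lemma isLittleO_sum_range_div_add_one {u : ℕ → ℝ} (hu : Tendsto u atTop (𝓝 0)) :
    (fun n => ∑ k ∈ Finset.range n, 1 / ((k : ℝ) + 1) * u k) =o[atTop]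
      fun n => ∑ k ∈ Finset.range n, 1 / ((k : ℝ) + 1) := by
  refine IsLittleO.sum_range ?_ (fun k => by positivity)
    tendsto_sum_range_one_div_nat_succ_atTop
  simpa using (isBigO_refl (fun k : ℕ => 1 / ((k : ℝ) + 1)) atTop).mul_isLittleO
    ((isLittleO_one_iff ℝ).2 hu)

lemma tendsto_natCeil_rpow_neg_nhdsGT_zero {s : ℝ} (hs : 0 < s) :
    Tendsto (fun ε : ℝ => ⌈ε ^ (-s)⌉₊) (𝓝[>] 0) atTop :=
  tendsto_nat_ceil_atTop.comp (tendsto_rpow_neg_nhdsGT_zero (neg_neg_of_pos hs))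

lemma isBigO_sum_range_natCeil_rpow_neg_log {s : ℝ} (hs : 0 < s) :
    (fun ε : ℝ => ∑ k ∈ Finset.range ⌈ε ^ (-s)⌉₊, 1 / ((k : ℝ) + 1)) =O[𝓝[>] 0] Real.log := by
  refine IsBigO.of_bound (2 + s) ?_
  filter_upwards [Ioo_mem_nhdsGT (Real.exp_pos (-1))] with ε ⟨hε, hεexp⟩
  have hlog : 1 ≤ -Real.log ε := by
    have := Real.log_lt_log hε hεexp
    rw [Real.log_exp] at this
    linarith
  have hpow : 1 ≤ ε ^ (-s) := by
    rw [Real.rpow_def_of_pos hε]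
    exact Real.one_le_exp (by nlinarith)
  have hceil : (⌈ε ^ (-s)⌉₊ : ℝ) ≤ 2 * ε ^ (-s) := by
    linarith [Nat.ceil_lt_add_one (zero_le_one.trans hpow)]
  have hlog2 : Real.log 2 ≤ 1 := by linarith [Real.log_two_lt_d9]
  rw [Real.norm_of_nonneg (Finset.sum_nonneg fun k _ => by positivity), Real.norm_eq_abs,
    abs_of_nonpos (by linarith)]
  calc ∑ k ∈ Finset.range ⌈ε ^ (-s)⌉₊, 1 / ((k : ℝ) + 1)
      ≤ 1 + Real.log ⌈ε ^ (-s)⌉₊ := sum_range_one_div_add_one_le _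
    _ ≤ 1 + Real.log (2 * ε ^ (-s)) := by
        gcongr
    _ = 1 + (Real.log 2 + s * -Real.log ε) := by
        rw [Real.log_mul two_ne_zero (by positivity), Real.log_rpow hε, neg_mul_comm]
    _ ≤ (2 + s) * -Real.log ε := by linarith

lemma summable_add_one_rpow_neg {s : ℝ} (hs : 1 < s) :
    Summable fun n : ℕ => ((n : ℝ) + 1) ^ (-s) := by
  simpa using (summable_nat_add_iff 1).2 (Real.summable_nat_rpow.2 (neg_lt_neg hs))

lemma rpow_neg_le_rpow_of_natCeil_le {ε b r : ℝ} {n : ℕ} (hε : 0 < ε) (hb : 0 < b)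
    (hn : ⌈ε ^ (-(2 * r / b))⌉₊ ≤ n) : ε ^ (-r) ≤ ((n : ℝ) + 1) ^ (b / 2) := by
  calc ε ^ (-r) = (ε ^ (-(2 * r / b))) ^ (b / 2) := by
        rw [← Real.rpow_mul hε.le]
        congr 1
        field
    _ ≤ ((n : ℝ) + 1) ^ (b / 2) := by
        gcongr
        linarith [Nat.ceil_le.1 hn]

lemma abs_tsum_one_div_add_one_mul_le {D u : ℕ → ℝ} {C b r ε : ℝ} (hb : 0 < b) (hε : 0 < ε)
    (hDu : ∀ n, |D n| ≤ u n)
    (hD : ∀ n : ℕ, |D n| ≤ C * ((n : ℝ) + 1) ^ (-b) * ε ^ (-r)) :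
    |∑' n : ℕ, 1 / ((n : ℝ) + 1) * D n| ≤
      ∑ n ∈ Finset.range ⌈ε ^ (-(2 * r / b))⌉₊, 1 / ((n : ℝ) + 1) * u n +
        C * ∑' n : ℕ, ((n : ℝ) + 1) ^ (-(1 + b / 2)) := by
  have hC : 0 ≤ C := by
    have hD0 := (abs_nonneg _).trans (hD 0)
    rw [Nat.cast_zero, zero_add, Real.one_rpow, mul_one] at hD0
    exact nonneg_of_mul_nonneg_left hD0 (by positivity)
  set M := ⌈ε ^ (-(2 * r / b))⌉₊
  let head (n : ℕ) : ℝ := if n ∈ Finset.range M then 1 / ((n : ℝ) + 1) * u n else 0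
  have hhead : HasSum head (∑ n ∈ Finset.range M, 1 / ((n : ℝ) + 1) * u n) := by
    rw [← Finset.sum_congr rfl fun n hn => if_pos hn]
    exact hasSum_sum_of_ne_finset_zero fun n hn => if_neg hn
  have htail := (summable_add_one_rpow_neg (by linarith : 1 < 1 + b / 2)).hasSum.mul_left C
  rw [← Real.norm_eq_abs]
  refine tsum_of_norm_bounded (hhead.add htail) fun n => ?_
  have hn : (0 : ℝ) < n + 1 := by positivity
  rw [Real.norm_eq_abs, abs_mul, abs_of_pos (one_div_pos.2 hn)]
  by_cases hnM : n ∈ Finset.range M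
  · simp only [head, if_pos hnM]
    refine le_add_of_le_of_nonneg ?_ (by positivity)
    gcongr
    exact hDu n
  · simp only [head, if_neg hnM, zero_add]
    calc 1 / ((n : ℝ) + 1) * |D n|
        ≤ 1 / ((n : ℝ) + 1) * (C * ((n : ℝ) + 1) ^ (-b) * ((n : ℝ) + 1) ^ (b / 2)) := by
          gcongr
          refine (hD n).trans ?_
          gcongr
          exact rpow_neg_le_rpow_of_natCeil_le hε hb (not_lt.1 (mt Finset.mem_range.2 hnM))
      _ = C * ((n : ℝ) + 1) ^ (-(1 + b / 2)) := by
          rw [show -(1 + b / 2) = -b + b / 2 - 1 by ring, Real.rpow_sub_one hn.ne',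
            Real.rpow_add hn]
          ring

theorem isLittleO_tsum_one_div_add_one_mul_log {D : ℝ → ℕ → ℝ} {u : ℕ → ℝ} {C b r : ℝ}
    (hb : 0 < b) (hr : 0 < r) (hu : Tendsto u atTop (𝓝 0)) (hDu : ∀ ε > 0, ∀ n, |D ε n| ≤ u n)
    (hD : ∀ ε > 0, ∀ n : ℕ, |D ε n| ≤ C * ((n : ℝ) + 1) ^ (-b) * ε ^ (-r)) :
    (fun ε => ∑' n : ℕ, 1 / ((n : ℝ) + 1) * D ε n) =o[𝓝[>] 0] Real.log := by
  have hs : 0 < 2 * r / b := by positivity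
  have hhead : (fun ε : ℝ => ∑ n ∈ Finset.range ⌈ε ^ (-(2 * r / b))⌉₊, 1 / ((n : ℝ) + 1) * u n)
      =o[𝓝[>] 0] Real.log :=
    ((isLittleO_sum_range_div_add_one hu).comp_tendsto
      (tendsto_natCeil_rpow_neg_nhdsGT_zero hs)).trans_isBigO
        (isBigO_sum_range_natCeil_rpow_neg_log hs)
  have htail : (fun _ : ℝ => C * ∑' n : ℕ, ((n : ℝ) + 1) ^ (-(1 + b / 2))) =o[𝓝[>] 0] Real.log :=
    isLittleO_const_left.2 (Or.inr (tendsto_abs_atBot_atTop.comp Real.tendsto_log_nhdsGT_zero))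
  refine IsBigO.trans_isLittleO (IsBigO.of_bound' ?_) (hhead.add htail)
  filter_upwards [self_mem_nhdsWithin] with ε hε
  exact (abs_tsum_one_div_add_one_mul_le hb hε (hDu ε hε) (hD ε hε)).trans (le_abs_self _)

end LogarithmicAverages

section TailSeries

lemma exists_tendsto_zero_forall_abs_cdf_sub_cdf_le {ι : Type*} {l : Filter ι}
    {μ : ι → ProbabilityMeasure ℝ} {ν : ProbabilityMeasure ℝ}
    [NullSingletonClass (ν : Measure ℝ)] (h : Tendsto μ l (𝓝 ν)) :
    ∃ u : ι → ℝ, Tendsto u l (𝓝 0) ∧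
      ∀ i x, |cdf (μ i : Measure ℝ) x - cdf (ν : Measure ℝ) x| ≤ u i := by
  have hle (i : ι) (x : ℝ) : |cdf (μ i : Measure ℝ) x - cdf (ν : Measure ℝ) x| ≤ 1 :=
    abs_sub_le_of_nonneg_of_le (cdf_nonneg _ x) (cdf_le_one _ x) (cdf_nonneg _ x) (cdf_le_one _ x)
  refine ⟨fun i => ⨆ x, |cdf (μ i : Measure ℝ) x - cdf (ν : Measure ℝ) x|, ?_,
    fun i x => le_ciSup (f := fun x => |cdf (μ i : Measure ℝ) x - cdf (ν : Measure ℝ) x|)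
      ⟨1, Set.forall_mem_range.2 (hle i)⟩ x⟩
  rw [Metric.tendsto_nhds]
  intro ε hε
  filter_upwards [Metric.tendstoUniformly_iff.1 (tendstoUniformly_cdf h) (ε / 2) (by positivity)]
    with i hi
  rw [dist_zero_right, Real.norm_of_nonneg (Real.iSup_nonneg fun x => abs_nonneg _)]
  refine (ciSup_le fun x => ?_).trans_lt (half_lt_self hε)
  rw [abs_sub_comm]
  exact (hi x).le

lemma nullSingletonClass_map_abs (ν : Measure ℝ) [NullSingletonClass ν] :
    NullSingletonClass (ν.map (|·|)) where
  measure_singleton x := by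
    rw [Measure.map_apply measurable_abs (measurableSet_singleton x)]
    refine ((Set.toFinite {x, -x}).subset fun y hy => ?_).measure_zero ν
    exact eq_or_eq_neg_of_abs_eq hy

lemma measureReal_map_lt_abs {Ω : Type*} [MeasurableSpace Ω] {μ : Measure Ω} {X : Ω → ℝ}
    (hX : AEMeasurable X μ) (x : ℝ) : (μ.map X).real {y | x < |y|} = μ.real {ω | x < |X ω|} :=
  map_measureReal_apply_of_aemeasurable hX (measurableSet_lt measurable_const measurable_abs)

lemma measureReal_lt_abs_eq_one_sub_cdf (μ : Measure ℝ) [IsProbabilityMeasure μ] (x : ℝ) :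
    μ.real {y | x < |y|} = 1 - cdf (μ.map (|·|)) x := by
  have : IsProbabilityMeasure (μ.map (|·|)) :=
    Measure.isProbabilityMeasure_map measurable_abs.aemeasurable
  rw [cdf_eq_real, ← probReal_compl_eq_one_sub measurableSet_Iic, Set.compl_Iic,
    map_measureReal_apply measurable_abs measurableSet_Ioi]
  rfl

lemma exists_tendsto_zero_forall_abs_measureReal_lt_abs_sub_le {ι : Type*} {l : Filter ι}
    {μ : ι → ProbabilityMeasure ℝ} {ν : ProbabilityMeasure ℝ}
    [NullSingletonClass (ν : Measure ℝ)] (h : Tendsto μ l (𝓝 ν)) :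
    ∃ u : ι → ℝ, Tendsto u l (𝓝 0) ∧ ∀ i x,
      |(μ i : Measure ℝ).real {y | x < |y|} - (ν : Measure ℝ).real {y | x < |y|}| ≤ u i := by
  have : NullSingletonClass (ν.map measurable_abs.aemeasurable : Measure ℝ) :=
    nullSingletonClass_map_abs ν
  obtain ⟨u, hu, hle⟩ := exists_tendsto_zero_forall_abs_cdf_sub_cdf_le
    (ProbabilityMeasure.tendsto_map_of_tendsto_of_continuous μ ν h continuous_abs)
  refine ⟨u, hu, fun i x => ?_⟩
  rw [measureReal_lt_abs_eq_one_sub_cdf, measureReal_lt_abs_eq_one_sub_cdf, sub_sub_sub_cancel_left,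
    abs_sub_comm]
  exact hle i x

lemma measureReal_lt_abs_le {Ω : Type*} [MeasurableSpace Ω] {μ : Measure Ω}
    [IsFiniteMeasure μ] {f : Ω → ℝ} (hf : MemLp f 2 μ) {x : ℝ} (hx : 0 < x) :
    μ.real {ω | x < |f ω|} ≤ (∫ ω, f ω ^ 2 ∂μ) / x ^ 2 := by
  rw [le_div_iff₀' (by positivity)]
  calc x ^ 2 * μ.real {ω | x < |f ω|}
      ≤ x ^ 2 * μ.real {ω | x ^ 2 ≤ f ω ^ 2} := by
        refine mul_le_mul_of_nonneg_left (measureReal_mono fun ω hω => ?_) (sq_nonneg x)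
        exact sq_le_sq.2 ((abs_of_pos hx).trans_le (le_of_lt hω))
    _ ≤ ∫ ω, f ω ^ 2 ∂μ :=
        mul_meas_ge_le_integral_of_nonneg (ae_of_all μ fun ω => sq_nonneg (f ω)) hf.integrable_sq _

lemma measureReal_mul_sqrt_lt_abs_le {μ : Measure ℝ} [IsFiniteMeasure μ] (hμ : MemLp id 2 μ)
    {C a ε : ℝ} {n : ℕ} (hmom : ∫ x, x ^ 2 ∂μ ≤ C * ((n : ℝ) + 1) ^ a) (hε : 0 < ε) :
    μ.real {x | ε * √((n : ℝ) + 1) < |x|} ≤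
      C * ((n : ℝ) + 1) ^ (-(1 - a)) * ε ^ (-2 : ℝ) := by
  have hn : (0 : ℝ) < n + 1 := by positivity
  calc μ.real {x | ε * √((n : ℝ) + 1) < |x|}
      ≤ (∫ x, x ^ 2 ∂μ) / (ε * √((n : ℝ) + 1)) ^ 2 := measureReal_lt_abs_le hμ (by positivity)
    _ ≤ C * ((n : ℝ) + 1) ^ a / (ε * √((n : ℝ) + 1)) ^ 2 := by gcongr
    _ = C * ((n : ℝ) + 1) ^ (-(1 - a)) * ε ^ (-2 : ℝ) := by
        rw [mul_pow, Real.sq_sqrt hn.le, neg_sub, Real.rpow_sub_one hn.ne', Real.rpow_neg hε.le,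
          Real.rpow_two]
        field

lemma summable_one_div_add_one_mul {f : ℕ → ℝ} {C b : ℝ} (hb : 0 < b) (hf : ∀ n, 0 ≤ f n)
    (hfC : ∀ n : ℕ, f n ≤ C * ((n : ℝ) + 1) ^ (-b)) :
    Summable fun n : ℕ => 1 / ((n : ℝ) + 1) * f n := by
  refine Summable.of_nonneg_of_le (fun n => mul_nonneg (by positivity) (hf n)) (fun n => ?_)
    ((summable_add_one_rpow_neg (lt_add_of_pos_left 1 hb)).mul_left C)
  have hn : (0 : ℝ) < n + 1 := by positivity
  calc 1 / ((n : ℝ) + 1) * f n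
      ≤ 1 / ((n : ℝ) + 1) * (C * ((n : ℝ) + 1) ^ (-b)) := by gcongr; exact hfC n
    _ = C * ((n : ℝ) + 1) ^ (-(b + 1)) := by
        rw [neg_add', Real.rpow_sub_one hn.ne']
        ring

lemma summable_one_div_add_one_mul_measureReal {μ : ℕ → Measure ℝ} [∀ n, IsFiniteMeasure (μ n)]
    (hμ : ∀ n, MemLp id 2 (μ n)) {C a ε : ℝ} (ha : a < 1)
    (hmom : ∀ n : ℕ, ∫ x, x ^ 2 ∂μ n ≤ C * ((n : ℝ) + 1) ^ a) (hε : 0 < ε) :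
    Summable fun n : ℕ => 1 / ((n : ℝ) + 1) * (μ n).real {x | ε * √((n : ℝ) + 1) < |x|} :=
  summable_one_div_add_one_mul (C := C * ε ^ (-2 : ℝ)) (sub_pos.2 ha)
    (fun _ => measureReal_nonneg) fun n =>
      (measureReal_mul_sqrt_lt_abs_le (hμ n) (hmom n) hε).trans_eq (mul_right_comm _ _ _)

theorem isLittleO_tsum_tail_sub_tsum_tail_log {μ : ℕ → ProbabilityMeasure ℝ}
    {ν : ProbabilityMeasure ℝ} [NullSingletonClass (ν : Measure ℝ)] (h : Tendsto μ atTop (𝓝 ν))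
    (hμ : ∀ n, MemLp id 2 (μ n : Measure ℝ)) (hν : MemLp id 2 (ν : Measure ℝ)) {C a : ℝ}
    (ha0 : 0 ≤ a) (ha1 : a < 1) (hmom : ∀ n : ℕ, ∫ x, x ^ 2 ∂μ n ≤ C * ((n : ℝ) + 1) ^ a) :
    (fun ε : ℝ =>
      ∑' n : ℕ, 1 / ((n : ℝ) + 1) * (μ n : Measure ℝ).real {x | ε * √((n : ℝ) + 1) < |x|} -
        ∑' n : ℕ, 1 / ((n : ℝ) + 1) * (ν : Measure ℝ).real {x | ε * √((n : ℝ) + 1) < |x|})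
      =o[𝓝[>] 0] Real.log := by
  obtain ⟨u, hu, hle⟩ := exists_tendsto_zero_forall_abs_measureReal_lt_abs_sub_le h
  set K := max C (∫ x, x ^ 2 ∂ν)
  have hμK (n : ℕ) : ∫ x, x ^ 2 ∂μ n ≤ K * ((n : ℝ) + 1) ^ a :=
    (hmom n).trans (by gcongr; exact le_max_left _ _)
  have hνK (n : ℕ) : ∫ x, x ^ 2 ∂ν ≤ K * ((n : ℝ) + 1) ^ a :=
    (le_max_right _ _).trans <| le_mul_of_one_le_right
      ((integral_nonneg fun x => sq_nonneg x).trans (le_max_right _ _))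
      (Real.one_le_rpow (by simp) ha0)
  refine (isLittleO_tsum_one_div_add_one_mul_log (C := K) (sub_pos.2 ha1) two_pos hu
    (fun ε _ n => hle n (ε * √((n : ℝ) + 1))) fun ε hε n => abs_sub_le_of_nonneg_of_le
      measureReal_nonneg (measureReal_mul_sqrt_lt_abs_le (hμ n) (hμK n) hε)
      measureReal_nonneg (measureReal_mul_sqrt_lt_abs_le hν (hνK n) hε)).congr' ?_ EventuallyEq.rfl
  filter_upwards [self_mem_nhdsWithin] with ε hε
  simp only [mul_sub]
  exact (summable_one_div_add_one_mul_measureReal hμ ha1 hμK hε).tsum_sub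
    (summable_one_div_add_one_mul_measureReal (fun _ => hν) ha1 hνK hε)

end TailSeries

section PreciseAsymptotics

variable {Ω : Type*} [MeasureSpace Ω] [IsProbabilityMeasure (ℙ : Measure Ω)]

lemma tendsto_probabilityMeasure_map {Z : ℕ → Ω → ℝ} {ν : Measure ℝ} [IsProbabilityMeasure ν]
    (hZ : ∀ n, AEMeasurable (Z n) ℙ) (h : _root_.TendstoInDistribution Z ν) :
    Tendsto (β := ProbabilityMeasure ℝ)
      (fun n => ⟨Measure.map (Z n) ℙ, Measure.isProbabilityMeasure_map (hZ n)⟩) atTop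
      (𝓝 ⟨ν, inferInstance⟩) := by
  refine ProbabilityMeasure.tendsto_iff_forall_integral_tendsto.2 fun f => ?_
  refine (h f).congr fun n => ?_
  exact (integral_map (hZ n) f.continuous.aestronglyMeasurable).symm

theorem tendsto_one_div_neg_log_mul_tsum_sub_tsum {Z : ℕ → Ω → ℝ} {N : Ω → ℝ} {ν : Measure ℝ}
    [IsProbabilityMeasure ν] [NullSingletonClass ν] (hZ : ∀ n, MemLp (Z n) 2 ℙ)
    (hconv : _root_.TendstoInDistribution Z ν) (hN : Measure.map N ℙ = ν) (hν : MemLp id 2 ν)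
    {C a c : ℝ} (ha0 : 0 ≤ a) (ha1 : a < 1)
    (hmom : ∀ n : ℕ, ∫ ω, Z n ω ^ 2 ≤ C * ((n : ℝ) + 1) ^ a) (hc : 0 < c) :
    Tendsto (fun ε : ℝ => (1 / (-Real.log (c * ε))) *
      ((∑' n : ℕ, (1 / ((n : ℝ) + 1)) *
          (ℙ : Measure Ω).real {ω | c * ε * √((n : ℝ) + 1) < |Z n ω|}) -
        ∑' n : ℕ, (1 / ((n : ℝ) + 1)) *
          (ℙ : Measure Ω).real {ω | c * ε * √((n : ℝ) + 1) < |N ω|})) (𝓝[>] 0) (𝓝 0) := by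
  have hZm (n : ℕ) : AEMeasurable (Z n) ℙ := (hZ n).aemeasurable
  have hNm : AEMeasurable N ℙ :=
    AEMeasurable.of_map_ne_zero (hN ▸ IsProbabilityMeasure.ne_zero ν)
  have hlaw (n : ℕ) : MemLp id 2 (Measure.map (Z n) ℙ) :=
    (memLp_map_measure_iff (by fun_prop) (hZm n)).2 (hZ n)
  have hmom' (n : ℕ) : ∫ x, x ^ 2 ∂(Measure.map (Z n) ℙ) ≤ C * ((n : ℝ) + 1) ^ a := by
    rw [integral_map (hZm n) (by fun_prop)]
    exact hmom n
  let ν' : ProbabilityMeasure ℝ := ⟨ν, inferInstance⟩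
  have : NullSingletonClass (ν' : Measure ℝ) := ‹NullSingletonClass ν›
  have hlittle := isLittleO_tsum_tail_sub_tsum_tail_log (ν := ν')
    (tendsto_probabilityMeasure_map hZm hconv) hlaw hν ha0 ha1 hmom'
  have hscale : Tendsto (c * ·) (𝓝[>] 0) (𝓝[>] 0) := by
    simpa only [comap_mulLeft_nhdsGT_zero hc] using
      tendsto_comap (f := (c * ·)) (x := 𝓝[>] (0 : ℝ))
  simp only [ν', ProbabilityMeasure.coe_mk, measureReal_map_lt_abs (hZm _)] at hlittle
  simp only [← hN, measureReal_map_lt_abs hNm] at hlittle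
  have hdiv := (hlittle.tendsto_div_nhds_zero.comp hscale).neg
  rw [neg_zero] at hdiv
  refine hdiv.congr fun ε => ?_
  simp only [Function.comp_apply]
  ring

theorem stmt_4_general (q : ℕ) (hq : q ≠ 0) (H : ℝ) (hH0 : 0 < H) (hH1 : H < 1)
    (B : ℝ → Ω → ℝ) (hB : IsFractionalBrownianMotion B H) (c₁ : ℝ) (hc₁ : 0 < c₁)
    (ν : Measure ℝ) [IsProbabilityMeasure ν] [NullSingletonClass ν] (hν : MemLp id 2 ν)
    (hconv : TendstoInDistribution
      (fun n ω => hermiteVariation B H q n ω / (c₁ * Real.sqrt n)) ν)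
    (N : Ω → ℝ) (hN : Measure.map N (ℙ : Measure Ω) = ν) (c : ℝ) (hc : 0 < c) :
    Tendsto
      (fun ε : ℝ =>
        (1 / (-Real.log (c * ε))) *
          ((∑' n : ℕ, (1 / ((n : ℝ) + 1)) *
              (ℙ {ω | c * ε * Real.sqrt ((n : ℝ) + 1) <
                |hermiteVariation B H q (n + 1) ω / (c₁ * Real.sqrt ((n : ℝ) + 1))|}).toReal) -
            ∑' n : ℕ, (1 / ((n : ℝ) + 1)) *
              (ℙ {ω | c * ε * Real.sqrt ((n : ℝ) + 1) < |N ω|}).toReal))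
      (𝓝[>] 0) (𝓝 0) := by
  have hconv' : _root_.TendstoInDistribution
      (fun n ω => hermiteVariation B H q (n + 1) ω / (c₁ * √((n : ℝ) + 1))) ν := fun f => by
    simpa using (tendsto_add_atTop_iff_nat 1).2 (hconv f)
  exact tendsto_one_div_neg_log_mul_tsum_sub_tsum
    (fun n => (hB.memLp_two_hermiteVariation q (n + 1)).mul_const _) hconv' hN hν
    (le_max_right _ _) (max_lt (by linarith) one_pos)
    (hB.integral_hermiteVariation_div_sq_le hH0 hH1.le hq hc₁.ne') hc

end PreciseAsymptotics

theorem stmt_4 {Ω : Type*} [MeasureSpace Ω] [IsProbabilityMeasure (ℙ : Measure Ω)]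
    (q : ℕ) (hq : 2 ≤ q) (H : ℝ) (hH0 : 0 < H) (hH1 : H < 1 - 1 / (2 * q))
    (B : ℝ → Ω → ℝ) (hB : IsFractionalBrownianMotion B H)
    (c₁ : ℝ) (hc₁ : 0 < c₁)
    (hconv : TendstoInDistribution
      (fun n ω => hermiteVariation B H q n ω / (c₁ * Real.sqrt n)) (gaussianReal 0 1))
    (N : Ω → ℝ) (hN : Measure.map N (ℙ : Measure Ω) = gaussianReal 0 1)
    (c : ℝ) (hc : 0 < c) :
    Tendsto
      (fun ε : ℝ =>
        (1 / (-Real.log (c * ε))) *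
          ((∑' n : ℕ, (1 / ((n : ℝ) + 1)) *
              (ℙ {ω | c * ε * Real.sqrt ((n : ℝ) + 1) <
                |hermiteVariation B H q (n + 1) ω / (c₁ * Real.sqrt ((n : ℝ) + 1))|}).toReal) -
            ∑' n : ℕ, (1 / ((n : ℝ) + 1)) *
              (ℙ {ω | c * ε * Real.sqrt ((n : ℝ) + 1) < |N ω|}).toReal))
      (𝓝[>] 0) (𝓝 0) := by
  have := nullSingletonClass_gaussianReal (μ := 0) (v := 1) one_ne_zero
  exact stmt_4_general q (by lia) H hH0 (hH1.trans (sub_lt_self 1 (by positivity))) B hB c₁ hc₁ _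
    (memLp_id_gaussianReal 2) hconv N hN c hc
end

section
/- Let q ≥ 2 be an integer, 1 − 1/(2q) < H < 1, let c_{2,q,H} > 0 be the constant for which Z_n := V_n/(c_{2,q,H} n^{1−q(1−H)}) converges in L²(Ω) to a random variable Z with E Z² = 1. Then for every c > 0, (1/(−log(cε))) · [ Σ_{n≥1} (1/n) P(|Z_n| > c ε n^{1−q(1−H)}) − Σ_{n≥1} (1/n) P(|Z| > c ε n^{1−q(1−H)}) ] converges to 0 as ε → 0⁺. -/
open MeasureTheory ProbabilityTheory Filter Real Topology

/-!
Let `D n t = P(|Zₙ| > t) - P(|Z| > t)`. It is bounded, it is `O(1 / t²)` by Chebyshev's inequality,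
and it tends to `0` as `n → ∞` and `t → 0⁺` *jointly* provided `Z` has no atom at `0`. In
`∑ D n (a n ^ d) / n` the range `a n ^ d ≤ τ` contains about `log (1 / a) / d` units of logarithmic
mass, on which `D` is eventually small, and the remaining range contributes `O(1)`.

There is no atom because `Zₙ` is a polynomial of degree at most `q` in Gaussian variables. If `x`
and `y` are independent copies of these variables, so are `cos θ x + sin θ y` and its orthogonal
counterpart, and along this rotation the polynomial is a trigonometric polynomial of degree at most
`q` in `θ`. If it is at most `t` in absolute value at more than `2 q` of `N` fixed angles, then it
is at most `C t` at both `x` and `y`. Averaging over the angles,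
`P(|Zₙ| ≤ t) ≤ 2 q / N + P(|Zₙ| ≤ C t)²`, so `p = P(Z = 0)` satisfies `p ≤ p²`, and
`p = 1` is excluded by `E Z² ≠ 0`.
-/

open scoped NNReal ENNReal

section LogarithmicSums

lemma mul_rpow_neg_one_sub_le {x s : ℝ} (hx : 0 < x) (hs : 0 ≤ s) :
    s * (x + 1) ^ (-1 - s) ≤ x ^ (-s) - (x + 1) ^ (-s) := by
  have hx1 : 0 < x + 1 := by linarith
  have hlog : 1 / (x + 1) ≤ log ((x + 1) / x) := by
    have h := one_sub_inv_le_log_of_pos (div_pos hx1 hx)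
    rwa [inv_div, one_sub_div hx1.ne', add_sub_cancel_left] at h
  have hratio : 1 + s / (x + 1) ≤ ((x + 1) / x) ^ s := by
    rw [rpow_def_of_pos (div_pos hx1 hx), mul_comm (log _)]
    have := mul_le_mul_of_nonneg_left hlog hs
    rw [mul_one_div] at this
    linarith [add_one_le_exp (s * log ((x + 1) / x))]
  have hsplit : x ^ (-s) = (x + 1) ^ (-s) * ((x + 1) / x) ^ s := by
    rw [div_rpow hx1.le hx.le, rpow_neg hx.le, rpow_neg hx1.le]
    field_simp
  have hpow : (x + 1) ^ (-1 - s) = (x + 1) ^ (-s) / (x + 1) := by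
    rw [sub_eq_neg_add, ← sub_eq_add_neg, rpow_sub_one hx1.ne']
  have := mul_le_mul_of_nonneg_left hratio (rpow_nonneg hx1.le (-s))
  rw [hsplit, hpow]
  linear_combination this

lemma tsum_rpow_neg_one_sub_le {s : ℝ} (hs : 0 < s) {k : ℕ} (hk : 0 < k) :
    ∑' n : ℕ, (((n + k : ℕ) : ℝ) + 1) ^ (-1 - s) ≤ (k : ℝ) ^ (-s) / s := by
  refine Real.tsum_le_of_sum_range_le (fun n ↦ by positivity) fun L ↦ ?_
  rw [le_div_iff₀' hs, Finset.mul_sum]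
  calc ∑ n ∈ Finset.range L, s * (((n + k : ℕ) : ℝ) + 1) ^ (-1 - s)
      ≤ ∑ n ∈ Finset.range L,
          (((n + k : ℕ) : ℝ) ^ (-s) - ((n + 1 + k : ℕ) : ℝ) ^ (-s)) :=
        Finset.sum_le_sum fun n _ ↦ by
          rw [add_right_comm n 1 k, Nat.cast_succ]
          exact mul_rpow_neg_one_sub_le (by positivity) hs.le
    _ = (k : ℝ) ^ (-s) - ((L + k : ℕ) : ℝ) ^ (-s) := by
        rw [Finset.sum_range_sub' fun n : ℕ ↦ ((n + k : ℕ) : ℝ) ^ (-s), zero_add]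
    _ ≤ (k : ℝ) ^ (-s) := sub_le_self _ (by positivity)

lemma summable_rpow_neg_one_sub {s : ℝ} (hs : 0 < s) :
    Summable fun n : ℕ ↦ ((n : ℝ) + 1) ^ (-1 - s) := by
  simpa only [Nat.cast_add, Nat.cast_one] using
    (summable_nat_add_iff 1).mpr (Real.summable_nat_rpow.mpr (by linarith : -1 - s < -1))

lemma abs_one_div_mul_le {x y A s : ℝ} (hx : 0 < x) (hy : |y| ≤ A * x ^ (-s)) :
    |1 / x * y| ≤ A * x ^ (-1 - s) := by
  rw [abs_mul, abs_of_pos (one_div_pos.mpr hx), one_div_mul_eq_div, sub_eq_neg_add,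
    ← sub_eq_add_neg, rpow_sub_one hx.ne', ← mul_div_assoc]
  gcongr

lemma summable_one_div_mul {A s : ℝ} (hs : 0 < s) {f : ℕ → ℝ}
    (hf : ∀ᶠ n : ℕ in atTop, |f n| ≤ A * ((n : ℝ) + 1) ^ (-s)) :
    Summable fun n : ℕ ↦ 1 / ((n : ℝ) + 1) * f n :=
  .of_norm_bounded_eventually_nat ((summable_rpow_neg_one_sub hs).mul_left A) <|
    hf.mono fun _ hn ↦ abs_one_div_mul_le (by positivity) hn

lemma sum_range_one_div_le_one_add_log (k : ℕ) :
    ∑ n ∈ Finset.range k, 1 / ((n : ℝ) + 1) ≤ 1 + log k := by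
  simpa [harmonic] using harmonic_le_one_add_log k

lemma abs_sum_range_one_div_mul_le {m k : ℕ} {η : ℝ} (hη : 0 ≤ η) {f : ℕ → ℝ}
    (hf₁ : ∀ n, |f n| ≤ 1) (hfη : ∀ n, m ≤ n → n < k → |f n| ≤ η) :
    |∑ n ∈ Finset.range k, 1 / ((n : ℝ) + 1) * f n| ≤ m + η * (1 + log k) := by
  have hterm : ∀ n ∈ Finset.range k, |1 / ((n : ℝ) + 1) * f n| ≤
      (if n < m then 1 else 0) + η * (1 / ((n : ℝ) + 1)) := fun n hn ↦ by
    have hpos : 0 ≤ 1 / ((n : ℝ) + 1) := by positivity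
    rw [abs_mul, abs_of_nonneg hpos]
    split_ifs with hnm
    · have h1 : 1 / ((n : ℝ) + 1) ≤ 1 := div_le_one_of_le₀ (by simp) (by positivity)
      linarith [mul_le_one₀ h1 (abs_nonneg _) (hf₁ n), mul_nonneg hη hpos]
    · rw [zero_add, mul_comm η]
      gcongr
      exact hfη n (not_lt.mp hnm) (Finset.mem_range.mp hn)
  have hcard : ∑ n ∈ Finset.range k, (if n < m then (1 : ℝ) else 0) ≤ m := by
    rw [Finset.sum_boole, Nat.cast_le]
    refine (Finset.card_le_card fun n hn ↦ ?_).trans_eq (Finset.card_range m)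
    exact Finset.mem_range.mpr (Finset.mem_filter.mp hn).2
  calc |∑ n ∈ Finset.range k, 1 / ((n : ℝ) + 1) * f n|
      ≤ ∑ n ∈ Finset.range k, ((if n < m then 1 else 0) + η * (1 / ((n : ℝ) + 1))) :=
        (Finset.abs_sum_le_sum_abs _ _).trans (Finset.sum_le_sum hterm)
    _ = ∑ n ∈ Finset.range k, (if n < m then (1 : ℝ) else 0) +
          η * ∑ n ∈ Finset.range k, 1 / ((n : ℝ) + 1) := by
        rw [Finset.sum_add_distrib, Finset.mul_sum]
    _ ≤ m + η * (1 + log k) := by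
        gcongr
        exact sum_range_one_div_le_one_add_log k

lemma abs_tsum_one_div_mul_le {m k : ℕ} (hk : 0 < k) {η A s : ℝ} (hη : 0 ≤ η) (hs : 0 < s)
    {f : ℕ → ℝ} (hf₁ : ∀ n, |f n| ≤ 1) (hfη : ∀ n, m ≤ n → n < k → |f n| ≤ η)
    (hfA : ∀ n, k ≤ n → |f n| ≤ A * ((n : ℝ) + 1) ^ (-s)) :
    |∑' n : ℕ, 1 / ((n : ℝ) + 1) * f n| ≤ m + η * (1 + log k) + A * ((k : ℝ) ^ (-s) / s) := by
  have hA : 0 ≤ A := nonneg_of_mul_nonneg_left ((abs_nonneg _).trans (hfA k le_rfl))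
    (by positivity)
  have htail : |∑' n : ℕ, 1 / (((n + k : ℕ) : ℝ) + 1) * f (n + k)| ≤
      A * ((k : ℝ) ^ (-s) / s) := by
    have hsum : Summable fun n : ℕ ↦ A * (((n + k : ℕ) : ℝ) + 1) ^ (-1 - s) :=
      ((summable_nat_add_iff k).mpr (summable_rpow_neg_one_sub hs)).mul_left A
    refine (tsum_of_norm_bounded
      (f := fun n : ℕ ↦ 1 / (((n + k : ℕ) : ℝ) + 1) * f (n + k)) hsum.hasSum fun n ↦
      abs_one_div_mul_le (by positivity) (hfA (n + k) (by omega))).trans ?_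
    rw [tsum_mul_left]
    exact mul_le_mul_of_nonneg_left (tsum_rpow_neg_one_sub_le hs hk) hA
  rw [← (summable_one_div_mul hs (eventually_atTop.mpr ⟨k, hfA⟩)).sum_add_tsum_nat_add k]
  exact (abs_add_le _ _).trans
    (add_le_add (abs_sum_range_one_div_mul_le hη hf₁ hfη) htail)

lemma div_sq_mul_rpow {K a x d : ℝ} (hx : 0 < x) :
    K / (a * x ^ d) ^ 2 = K / a ^ 2 * x ^ (-(2 * d)) := by
  rw [mul_pow, ← rpow_natCast (x ^ d), ← rpow_mul hx.le, rpow_neg hx.le, Nat.cast_ofNat,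
    mul_comm d, div_mul_eq_div_div, div_eq_mul_inv _ (x ^ (2 * d))]

lemma summable_one_div_mul_rpow {a d K : ℝ} {D : ℕ → ℝ → ℝ} (ha : 0 < a) (hd : 0 < d)
    (hDK : ∀ᶠ n in atTop, ∀ t, 0 < t → |D n t| ≤ K / t ^ 2) :
    Summable fun n : ℕ ↦ 1 / ((n : ℝ) + 1) * D n (a * ((n : ℝ) + 1) ^ d) := by
  refine summable_one_div_mul (s := 2 * d) (A := K / a ^ 2) (by positivity) ?_
  filter_upwards [hDK] with n hn
  rw [← div_sq_mul_rpow (by positivity)]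
  exact hn _ (by positivity)

/-- The head `n < (τ/a)^{1/d}`, where `a (n+1)^d ≤ τ`, contributes the logarithm; beyond it the
quadratic decay makes the rest bounded uniformly in `a`. -/
lemma abs_tsum_one_div_mul_rpow_le {d K τ η a : ℝ} {m : ℕ} {D : ℕ → ℝ → ℝ} (hd : 0 < d)
    (hK : 0 ≤ K) (hτ : 0 < τ) (hη : 0 ≤ η) (ha : 0 < a) (hm : (m : ℝ) ≤ (τ / a) ^ d⁻¹)
    (haτ : a ≤ τ) (hD₁ : ∀ n t, |D n t| ≤ 1)
    (hDη : ∀ n, m ≤ n → ∀ t, 0 < t → t ≤ τ → |D n t| ≤ η)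
    (hDK : ∀ n, m ≤ n → ∀ t, 0 < t → |D n t| ≤ K / t ^ 2) :
    |∑' n : ℕ, 1 / ((n : ℝ) + 1) * D n (a * ((n : ℝ) + 1) ^ d)| ≤
      m + η * (1 + (log τ - log a) / d) + K / τ ^ 2 * (2 ^ (2 * d) / (2 * d)) := by
  set M : ℝ := (τ / a) ^ d⁻¹ with hM
  have hM1 : 1 ≤ M := one_le_rpow ((one_le_div ha).mpr haτ) (by positivity)
  have hM0 : 0 < M := by positivity
  have hMd : a * M ^ d = τ := by
    rw [hM, rpow_inv_rpow (by positivity) hd.ne', mul_div_cancel₀ _ ha.ne']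
  have hlogM : log M = (log τ - log a) / d := by
    rw [hM, log_rpow (by positivity), log_div hτ.ne' ha.ne', inv_mul_eq_div]
  have hd2 : 0 ≤ 2 * d := by positivity
  have hk : 0 < ⌊M⌋₊ := Nat.floor_pos.mpr hM1
  have hkM : (⌊M⌋₊ : ℝ) ≤ M := Nat.floor_le hM0.le
  have hMk : M / 2 ≤ ⌊M⌋₊ := by
    have : (1 : ℝ) ≤ ⌊M⌋₊ := by exact_mod_cast hk
    linarith [Nat.lt_floor_add_one M]
  have hpos (n : ℕ) : 0 < a * ((n : ℝ) + 1) ^ d := by positivity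
  have hsum := abs_tsum_one_div_mul_le (f := fun n ↦ D n (a * ((n : ℝ) + 1) ^ d))
    (A := K / a ^ 2) (s := 2 * d) (m := m) hk hη (by positivity) (fun n ↦ hD₁ n _)
    (fun n hmn hnk ↦ hDη n hmn _ (hpos n) <| by
      have : (n : ℝ) + 1 ≤ M := le_trans (by exact_mod_cast hnk) hkM
      rw [← hMd]
      gcongr)
    (fun n hkn ↦ by
      rw [← div_sq_mul_rpow (by positivity)]
      exact hDK n ((Nat.le_floor hm).trans hkn) _ (hpos n))
  have hlog : log ⌊M⌋₊ ≤ (log τ - log a) / d :=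
    hlogM ▸ log_le_log (by exact_mod_cast hk) hkM
  have htail : K / a ^ 2 * ((⌊M⌋₊ : ℝ) ^ (-(2 * d)) / (2 * d)) ≤
      K / τ ^ 2 * (2 ^ (2 * d) / (2 * d)) := by
    calc K / a ^ 2 * ((⌊M⌋₊ : ℝ) ^ (-(2 * d)) / (2 * d))
        ≤ K / a ^ 2 * ((M / 2) ^ (-(2 * d)) / (2 * d)) := by
          have := rpow_le_rpow_of_nonpos (by positivity) hMk (neg_nonpos.mpr hd2)
          gcongr
      _ = K / a ^ 2 * M ^ (-(2 * d)) * (2 ^ (2 * d) / (2 * d)) := by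
          rw [div_rpow hM0.le zero_le_two, rpow_neg zero_le_two]
          field_simp
      _ = K / τ ^ 2 * (2 ^ (2 * d) / (2 * d)) := by
          rw [← div_sq_mul_rpow hM0, hMd]
  calc _ ≤ _ := hsum
    _ ≤ _ := by gcongr

theorem isLittleO_tsum_one_div_mul_rpow_log {d K : ℝ} {D : ℕ → ℝ → ℝ} (hd : 0 < d) (hK : 0 ≤ K)
    (hD₁ : ∀ n t, |D n t| ≤ 1)
    (hD₀ : Tendsto (fun p : ℕ × ℝ ↦ D p.1 p.2) (atTop ×ˢ 𝓝[>] 0) (𝓝 0))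
    (hDK : ∀ᶠ n in atTop, ∀ t, 0 < t → |D n t| ≤ K / t ^ 2) :
    (fun a ↦ ∑' n : ℕ, 1 / ((n : ℝ) + 1) * D n (a * ((n : ℝ) + 1) ^ d)) =o[𝓝[>] 0] log := by
  refine Asymptotics.isLittleO_iff.mpr fun e he ↦ ?_
  set η : ℝ := e * d / 2 with hη
  obtain ⟨pN, hpN, pT, hpT, hsmall⟩ := eventually_prod_iff.mp
    (hD₀.norm.eventually (ge_mem_nhds (by simpa using (by positivity : 0 < η))))
  obtain ⟨m, hm⟩ := eventually_atTop.mp (hpN.and hDK)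
  obtain ⟨τ, hτ, hτT⟩ := mem_nhdsGT_iff_exists_Ioc_subset.mp hpT
  rw [Set.mem_Ioi] at hτ
  set R : ℝ := m + η * (1 + log τ / d) + K / τ ^ 2 * (2 ^ (2 * d) / (2 * d)) with hR
  have hneglog : Tendsto (fun a ↦ -log a) (𝓝[>] 0) atTop :=
    tendsto_neg_atBot_atTop.comp tendsto_log_nhdsGT_zero
  have hcut : Tendsto (fun a ↦ (τ / a) ^ d⁻¹) (𝓝[>] 0) atTop :=
    (tendsto_rpow_atTop (inv_pos.mpr hd)).comp
      (tendsto_inv_nhdsGT_zero.const_mul_atTop hτ)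
  filter_upwards [self_mem_nhdsWithin, Ioc_mem_nhdsGT hτ, hcut.eventually_ge_atTop (m : ℝ),
    hneglog.eventually_ge_atTop (R / (e / 2))] with a ha haτ hma hRa
  have hbound := abs_tsum_one_div_mul_rpow_le hd hK hτ (by positivity) ha hma haτ.2 hD₁
    (fun n hn t ht htτ ↦ hsmall (hm n hn).1 (hτT ⟨ht, htτ⟩)) (fun n hn ↦ (hm n hn).2)
  rw [div_le_iff₀ (by positivity)] at hRa
  calc |∑' n : ℕ, 1 / ((n : ℝ) + 1) * D n (a * ((n : ℝ) + 1) ^ d)|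
      ≤ R + e / 2 * -log a := hbound.trans_eq (by rw [hR, hη]; field_simp; ring)
    _ ≤ e * -log a := by linarith
    _ ≤ e * ‖log a‖ := by
        gcongr
        exact neg_le_abs _

end LogarithmicSums

section Distribution

lemma tendsto_const_mul_nhdsGT_zero {r : ℝ} (hr : 0 < r) :
    Tendsto (r * ·) (𝓝[>] 0) (𝓝[>] 0) :=
  tendsto_iff_comap.mpr (comap_mulLeft_nhdsGT_zero hr).ge

variable {Ω : Type*} {mΩ : MeasurableSpace Ω} {P : Measure Ω}

lemma measureReal_le_le_add [IsFiniteMeasure P] (X Y : Ω → ℝ) (t s : ℝ) :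
    P.real {ω | X ω ≤ t} ≤ P.real {ω | Y ω ≤ t + s} + P.real {ω | s ≤ ‖X ω - Y ω‖} := by
  refine (measureReal_mono fun ω (hω : X ω ≤ t) ↦ ?_).trans (measureReal_union_le _ _)
  refine (le_or_gt (Y ω) (t + s)).imp id fun hY ↦ ?_
  have : s ≤ -(X ω - Y ω) := by linarith
  exact this.trans (neg_le_abs _)

lemma tendsto_measureReal_le_nhdsGT [IsProbabilityMeasure P] {Y : Ω → ℝ} (hY : AEMeasurable Y P)
    (a : ℝ) : Tendsto (fun t ↦ P.real {ω | Y ω ≤ t}) (𝓝[>] a) (𝓝 (P.real {ω | Y ω ≤ a})) := by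
  have := Measure.isProbabilityMeasure_map hY
  have hcdf (t : ℝ) : cdf (P.map Y) t = P.real {ω | Y ω ≤ t} := by
    rw [cdf_eq_real, map_measureReal_apply_of_aemeasurable hY measurableSet_Iic]
    rfl
  simp only [← hcdf]
  exact ((cdf (P.map Y)).right_continuous a).mono_left (nhdsWithin_mono _ Set.Ioi_subset_Ici_self)

lemma one_sub_measureReal_lt [IsProbabilityMeasure P] {Y : Ω → ℝ} (hY : AEMeasurable Y P)
    (t : ℝ) : 1 - P.real {ω | t < Y ω} = P.real {ω | Y ω ≤ t} := by
  rw [← probReal_compl_eq_one_sub₀ (nullMeasurableSet_lt aemeasurable_const hY)]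
  simp only [Set.compl_ofPred, not_lt]

lemma tendsto_measureReal_le_prod_nhdsGT [IsProbabilityMeasure P] {ι : Type*} {l : Filter ι}
    {X : ι → Ω → ℝ} {Y : Ω → ℝ} {a : ℝ} (hXY : TendstoInMeasure P X l Y) (hY : AEMeasurable Y P)
    (ha : P.real {ω | Y ω ≤ a} = 0) :
    Tendsto (fun p : ι × ℝ ↦ P.real {ω | X p.1 ω ≤ p.2}) (l ×ˢ 𝓝[>] a) (𝓝 0) := by
  refine tendsto_order.mpr ⟨fun b hb ↦ .of_forall fun _ ↦ hb.trans_le measureReal_nonneg,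
    fun e he ↦ ?_⟩
  have hYa := tendsto_measureReal_le_nhdsGT hY a
  rw [ha] at hYa
  obtain ⟨u, hYu, hau⟩ :=
    ((hYa.eventually (gt_mem_nhds (half_pos he))).and self_mem_nhdsWithin).exists
  obtain ⟨b, hab, hbu⟩ := exists_between hau
  have hX := (tendstoInMeasure_iff_measureReal_norm.mp hXY (u - b) (sub_pos.mpr hbu)).eventually
    (gt_mem_nhds (half_pos he))
  filter_upwards [hX.prod_mk (Ioc_mem_nhdsGT hab)] with p ⟨hp, hpb⟩
  calc P.real {ω | X p.1 ω ≤ p.2}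
      ≤ P.real {ω | X p.1 ω ≤ b} := measureReal_mono fun ω (hω : X p.1 ω ≤ p.2) ↦ hω.trans hpb.2
    _ ≤ P.real {ω | Y ω ≤ u} + P.real {ω | u - b ≤ ‖X p.1 ω - Y ω‖} := by
        simpa only [add_sub_cancel] using measureReal_le_le_add (P := P) (X p.1) Y b (u - b)
    _ < e / 2 + e / 2 := add_lt_add hYu hp
    _ = e := add_halves e

lemma measureReal_lt_le_sq_div_sq {X : Ω → ℝ} (hX : AEStronglyMeasurable X P)
    {M : ℝ≥0} (hM : eLpNorm X 2 P ≤ M) {t : ℝ} (ht : 0 < t) :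
    P.real {ω | t < X ω} ≤ M ^ 2 / t ^ 2 := by
  have hsub : {ω | t < X ω} ⊆ {ω | ENNReal.ofReal t ≤ ‖X ω‖ₑ} := fun ω (hω : t < X ω) ↦ by
    rw [Set.mem_ofPred_eq, Real.enorm_eq_ofReal_abs]
    exact ENNReal.ofReal_le_ofReal (hω.le.trans (le_abs_self _))
  refine ENNReal.toReal_le_of_le_ofReal (by positivity) ?_
  calc P {ω | t < X ω} ≤ (ENNReal.ofReal t)⁻¹ ^ 2 * eLpNorm X 2 P ^ 2 := by
        simpa only [ENNReal.toReal_ofNat, ENNReal.rpow_ofNat] using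
          (measure_mono hsub).trans (meas_ge_le_mul_pow_eLpNorm_enorm P two_ne_zero
            ENNReal.ofNat_ne_top hX (by simpa using ht) (by simp))
    _ ≤ (ENNReal.ofReal t)⁻¹ ^ 2 * M ^ 2 := by gcongr
    _ = ENNReal.ofReal (M ^ 2 / t ^ 2) := by
        rw [← ENNReal.ofReal_inv_of_pos ht, ← ENNReal.ofReal_pow (by positivity),
          ← ENNReal.ofReal_coe_nnreal, ← ENNReal.ofReal_pow (by positivity),
          ← ENNReal.ofReal_mul (by positivity), inv_pow, inv_mul_eq_div]

lemma exists_eventually_eLpNorm_le {p : ℝ≥0∞} (hp : 1 ≤ p) {ι : Type*} {l : Filter ι}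
    {X : ι → Ω → ℝ} {Y : Ω → ℝ} (hX : ∀ i, AEStronglyMeasurable (X i) P) (hY : MemLp Y p P)
    (hXY : Tendsto (fun i ↦ eLpNorm (X i - Y) p P) l (𝓝 0)) :
    ∃ M : ℝ≥0, eLpNorm Y p P ≤ M ∧ ∀ᶠ i in l, eLpNorm (X i) p P ≤ M := by
  refine ⟨1 + (eLpNorm Y p P).toNNReal, ?_, ?_⟩
  · rw [ENNReal.coe_add, ENNReal.coe_toNNReal hY.eLpNorm_ne_top]
    exact le_add_self
  · filter_upwards [hXY.eventually (ge_mem_nhds zero_lt_one)] with i hi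
    rw [ENNReal.coe_add, ENNReal.coe_toNNReal hY.eLpNorm_ne_top, ENNReal.coe_one]
    calc eLpNorm (X i) p P = eLpNorm (X i - Y + Y) p P := by rw [sub_add_cancel]
      _ ≤ eLpNorm (X i - Y) p P + eLpNorm Y p P := eLpNorm_add_le ((hX i).sub hY.1) hY.1 hp
      _ ≤ 1 + eLpNorm Y p P := by gcongr

theorem isLittleO_tsum_measureReal_lt_sub_tsum_log [IsProbabilityMeasure P] {X : ℕ → Ω → ℝ}
    {Y : Ω → ℝ} {d : ℝ} (hd : 0 < d) (hX : ∀ n, AEStronglyMeasurable (X n) P) (hY : MemLp Y 2 P)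
    (hXY : Tendsto (fun n ↦ eLpNorm (X n - Y) 2 P) atTop (𝓝 0)) (hY₀ : P.real {ω | Y ω ≤ 0} = 0) :
    (fun a ↦ ∑' n : ℕ, 1 / ((n : ℝ) + 1) * P.real {ω | a * ((n : ℝ) + 1) ^ d < X n ω} -
        ∑' n : ℕ, 1 / ((n : ℝ) + 1) * P.real {ω | a * ((n : ℝ) + 1) ^ d < Y ω})
      =o[𝓝[>] 0] log := by
  obtain ⟨M, hMY, hMX⟩ := exists_eventually_eLpNorm_le one_le_two hX hY hXY
  have hXK : ∀ᶠ n in atTop, ∀ t, 0 < t → P.real {ω | t < X n ω} ≤ M ^ 2 / t ^ 2 :=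
    hMX.mono fun n hn t ht ↦ measureReal_lt_le_sq_div_sq (hX n) hn ht
  have hYK : ∀ t, 0 < t → P.real {ω | t < Y ω} ≤ M ^ 2 / t ^ 2 :=
    fun t ht ↦ measureReal_lt_le_sq_div_sq hY.1 hMY ht
  have hXY₀ := tendsto_measureReal_le_prod_nhdsGT
    (tendstoInMeasure_of_tendsto_eLpNorm two_ne_zero hX hY.1 hXY) hY.1.aemeasurable hY₀
  have hYY₀ := (tendsto_measureReal_le_nhdsGT hY.1.aemeasurable 0).comp
    (tendsto_snd (f := (atTop : Filter ℕ)))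
  refine (isLittleO_tsum_one_div_mul_rpow_log hd (sq_nonneg (M : ℝ))
    (D := fun n t ↦ P.real {ω | t < X n ω} - P.real {ω | t < Y ω})
    (fun n t ↦ abs_sub_le_of_nonneg_of_le measureReal_nonneg measureReal_le_one
      measureReal_nonneg measureReal_le_one) ?_ ?_).congr' ?_ .rfl
  · have h := hYY₀.sub hXY₀
    simp only [hY₀, sub_zero] at h
    refine h.congr fun p ↦ ?_
    rw [Function.comp_apply, ← one_sub_measureReal_lt hY.1.aemeasurable,
      ← one_sub_measureReal_lt (hX p.1).aemeasurable, sub_sub_sub_cancel_left]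
  · filter_upwards [hXK] with n hn t ht
    exact abs_sub_le_of_nonneg_of_le measureReal_nonneg (hn t ht) measureReal_nonneg (hYK t ht)
  · filter_upwards [self_mem_nhdsWithin] with a (ha : 0 < a)
    simp only [mul_sub]
    exact (summable_one_div_mul_rpow (D := fun n t ↦ P.real {ω | t < X n ω}) ha hd
      (hXK.mono fun n hn t ht ↦ (abs_of_nonneg measureReal_nonneg).trans_le (hn t ht))).tsum_sub
      (summable_one_div_mul_rpow (D := fun _ t ↦ P.real {ω | t < Y ω}) ha hd
        (.of_forall fun _ t ht ↦ (abs_of_nonneg measureReal_nonneg).trans_le (hYK t ht)))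

end Distribution

section Polynomials

open Polynomial (C X)

lemma exists_norm_eval_le_of_card_lt {𝕜 : Type*} [NormedField 𝕜] (d : ℕ) (A : Finset 𝕜) (z : 𝕜) :
    ∃ C : ℝ, 0 ≤ C ∧ ∀ Q : Polynomial 𝕜, Q.natDegree ≤ d → ∀ S ⊆ A, d < S.card → ∀ t : ℝ,
      (∀ w ∈ S, ‖Q.eval w‖ ≤ t) → ‖Q.eval z‖ ≤ C * t := by
  classical
  set L : Finset 𝕜 → ℝ := fun S ↦ ∑ w ∈ S, ‖(Lagrange.basis S id w).eval z‖
  have hL₀ (S : Finset 𝕜) : 0 ≤ L S := Finset.sum_nonneg fun _ _ ↦ norm_nonneg _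
  refine ⟨∑ S ∈ A.powerset, L S, Finset.sum_nonneg fun S _ ↦ hL₀ S, fun Q hQ S hSA hS t ht ↦ ?_⟩
  obtain ⟨w₀, hw₀⟩ := Finset.card_pos.mp (Nat.zero_lt_of_lt hS)
  have ht₀ : 0 ≤ t := (norm_nonneg _).trans (ht w₀ hw₀)
  have hdeg : Q.degree < S.card :=
    Polynomial.degree_le_natDegree.trans_lt (Nat.cast_lt.mpr (hQ.trans_lt hS))
  calc ‖Q.eval z‖ = ‖∑ w ∈ S, Q.eval w * (Lagrange.basis S id w).eval z‖ := by
        conv_lhs => rw [Lagrange.eq_interpolate (v := id) Function.injective_id.injOn hdeg]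
        simp only [Lagrange.interpolate_apply, Polynomial.eval_finsetSum, Polynomial.eval_mul,
          Polynomial.eval_C, id_eq]
    _ ≤ ∑ w ∈ S, t * ‖(Lagrange.basis S id w).eval z‖ := by
        refine norm_sum_le_of_le _ fun w hw ↦ ?_
        rw [norm_mul]
        exact mul_le_mul_of_nonneg_right (ht w hw) (norm_nonneg _)
    _ = L S * t := by rw [← Finset.mul_sum, mul_comm]
    _ ≤ (∑ S ∈ A.powerset, L S) * t := by
        gcongr
        exact Finset.single_le_sum (fun S _ ↦ hL₀ S) (Finset.mem_powerset.mpr hSA)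

lemma exists_eval_eq_pow_mul_aeval_div {R K ι : Type*} [CommSemiring R] [Field K] [Algebra R K]
    {p : MvPolynomial ι R} {q k : ℕ} (hp : p.totalDegree ≤ q) {F : ι → Polynomial K}
    {G : Polynomial K} (hF : ∀ i, (F i).natDegree ≤ k) (hG : G.natDegree ≤ k) :
    ∃ Q : Polynomial K, Q.natDegree ≤ k * q ∧ ∀ w, G.eval w ≠ 0 →
      Q.eval w = G.eval w ^ q * MvPolynomial.aeval (fun i ↦ (F i).eval w / G.eval w) p := by
  have hdeg {m : ι →₀ ℕ} (hm : m ∈ p.support) : (∑ i ∈ m.support, m i) ≤ q :=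
    (MvPolynomial.le_totalDegree hm).trans hp
  refine ⟨∑ m ∈ p.support, C (algebraMap R K (p.coeff m)) *
    (G ^ (q - ∑ i ∈ m.support, m i) * ∏ i ∈ m.support, F i ^ m i), ?_, fun w hw ↦ ?_⟩
  · refine Polynomial.natDegree_sum_le_of_forall_le _ _ fun m hm ↦ ?_
    have hprod : (∏ i ∈ m.support, F i ^ m i).natDegree ≤ ∑ i ∈ m.support, m i * k :=
      (Polynomial.natDegree_prod_le _ _).trans <| Finset.sum_le_sum fun i _ ↦
        Polynomial.natDegree_pow_le_of_le _ (hF i)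
    calc _ ≤ (q - ∑ i ∈ m.support, m i) * k + ∑ i ∈ m.support, m i * k :=
          (Polynomial.natDegree_C_mul_le _ _).trans <| Polynomial.natDegree_mul_le_of_le
            (Polynomial.natDegree_pow_le_of_le _ hG) hprod
      _ = k * q := by
          rw [← Finset.sum_mul, ← add_mul, Nat.sub_add_cancel (hdeg hm), mul_comm]
  · rw [MvPolynomial.aeval_def, MvPolynomial.eval₂_eq, Polynomial.eval_finsetSum, Finset.mul_sum]
    refine Finset.sum_congr rfl fun m hm ↦ ?_
    simp only [Polynomial.eval_mul, Polynomial.eval_C, Polynomial.eval_pow, Polynomial.eval_prod,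
      div_pow, Finset.prod_div_distrib, Finset.prod_pow_eq_pow_sum]
    rw [pow_sub₀ _ hw (hdeg hm)]
    ring

/-- With `w = exp (θ * I)`, the coordinates `cos θ * x i + sin θ * y i` are
`((x i - I * y i) * w ^ 2 + (x i + I * y i)) / (2 * w)`. -/
lemma exists_norm_eval_exp_eq_abs_eval_cos_add_sin {ι : Type*} {p : MvPolynomial ι ℝ} {q : ℕ}
    (hp : p.totalDegree ≤ q) (x y : ι → ℝ) :
    ∃ Q : Polynomial ℂ, Q.natDegree ≤ 2 * q ∧ ∀ θ : ℝ,
      ‖Q.eval (Complex.exp (θ * Complex.I))‖ =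
        |MvPolynomial.eval (Real.cos θ • x + Real.sin θ • y) p| := by
  obtain ⟨Q, hQ, hQeval⟩ := exists_eval_eq_pow_mul_aeval_div (K := ℂ) (k := 2) (G := X) hp
    (F := fun i ↦ C ((x i - Complex.I * y i) / 2) * X ^ 2 + C ((x i + Complex.I * y i) / 2))
    (fun i ↦ by compute_degree) (by simp)
  refine ⟨Q, hQ, fun θ ↦ ?_⟩
  have hcoord : (fun i ↦ (C ((x i - Complex.I * y i) / 2) * X ^ 2 +
      C ((x i + Complex.I * y i) / 2)).eval (Complex.exp (θ * Complex.I)) /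
        X.eval (Complex.exp (θ * Complex.I))) =
      algebraMap ℝ ℂ ∘ (Real.cos θ • x + Real.sin θ • y) := by
    funext i
    simp only [Polynomial.eval_add, Polynomial.eval_mul, Polynomial.eval_C, Polynomial.eval_pow,
      Polynomial.eval_X, Function.comp_apply, Pi.add_apply, Pi.smul_apply, smul_eq_mul,
      Complex.coe_algebraMap, Complex.ofReal_add, Complex.ofReal_mul, Complex.ofReal_cos,
      Complex.ofReal_sin]
    rw [div_eq_iff (Complex.exp_ne_zero _), Complex.exp_mul_I]
    linear_combination (-(x i : ℂ) / 2 - Complex.I * y i / 2) * Complex.sin_sq_add_cos_sq (θ : ℂ) +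
      (x i * Complex.sin θ ^ 2 / 2 - Complex.I * y i * Complex.sin θ ^ 2 / 2 -
        y i * Complex.cos θ * Complex.sin θ) * Complex.I_sq
  rw [hQeval _ (by simp), hcoord, MvPolynomial.aeval_algebraMap_apply, norm_mul, norm_pow,
    Polynomial.eval_X, Complex.norm_exp_ofReal_mul_I, one_pow, one_mul, Complex.coe_algebraMap,
    Complex.norm_real, Real.norm_eq_abs]
  rfl

lemma injOn_exp_mul_I_Ioc :
    Set.InjOn (fun θ : ℝ ↦ Complex.exp (θ * Complex.I)) (Set.Ioc (-π) π) := by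
  intro θ hθ θ' hθ' h
  have h' := Complex.exp_inj_of_neg_pi_lt_of_le_pi (by simpa using hθ.1) (by simpa using hθ.2)
    (by simpa using hθ'.1) (by simpa using hθ'.2) h
  simpa using h'

lemma exists_abs_eval_le_of_card_lt_rotations (q : ℕ) {T : Finset ℝ}
    (hT : (T : Set ℝ) ⊆ Set.Ioc (-π) π) :
    ∃ C : ℝ, 0 ≤ C ∧ ∀ {ι : Type*} {p : MvPolynomial ι ℝ}, p.totalDegree ≤ q →
      ∀ x y : ι → ℝ, ∀ S ⊆ T, 2 * q < S.card → ∀ t : ℝ,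
      (∀ θ ∈ S, |MvPolynomial.eval (cos θ • x + sin θ • y) p| ≤ t) →
        |MvPolynomial.eval x p| ≤ C * t ∧ |MvPolynomial.eval y p| ≤ C * t := by
  classical
  set e : ℝ → ℂ := fun θ ↦ Complex.exp (θ * Complex.I)
  obtain ⟨C₀, hC₀, hx⟩ := exists_norm_eval_le_of_card_lt (2 * q) (T.image e) (e 0)
  obtain ⟨C₁, -, hy⟩ := exists_norm_eval_le_of_card_lt (2 * q) (T.image e) (e (π / 2))
  refine ⟨max C₀ C₁, hC₀.trans (le_max_left _ _), fun {ι p} hp x y S hST hS t ht ↦ ?_⟩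
  obtain ⟨Q, hQ, hQe⟩ := exists_norm_eval_exp_eq_abs_eval_cos_add_sin hp x y
  have hcard : 2 * q < (S.image e).card := by
    rwa [Finset.card_image_of_injOn (injOn_exp_mul_I_Ioc.mono (subset_trans hST hT))]
  have hle : ∀ w ∈ S.image e, ‖Q.eval w‖ ≤ t :=
    Finset.forall_mem_image.mpr fun θ hθ ↦ (hQe θ).trans_le (ht θ hθ)
  have ht₀ : 0 ≤ t := by
    obtain ⟨θ, hθ⟩ := Finset.card_pos.mp (Nat.zero_lt_of_lt hS)
    exact (abs_nonneg _).trans (ht θ hθ)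
  have hx' := hx Q hQ _ (Finset.image_subset_image hST) hcard t hle
  have hy' := hy Q hQ _ (Finset.image_subset_image hST) hcard t hle
  rw [hQe, cos_zero, sin_zero, one_smul, zero_smul, add_zero] at hx'
  rw [hQe, cos_pi_div_two, sin_pi_div_two, one_smul, zero_smul, zero_add] at hy'
  exact ⟨hx'.trans (by gcongr; exact le_max_left _ _),
    hy'.trans (by gcongr; exact le_max_right _ _)⟩

end Polynomials

section GaussianPolynomials

lemma sum_measureReal_le_of_card_lt_imp_mem {α ι : Type*} [MeasurableSpace α] {ν : Measure α}
    [IsProbabilityMeasure ν] {T : Finset ι} {A : ι → Set α} {G : Set α} {k : ℕ}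
    (hA : ∀ i, MeasurableSet (A i)) (hG : MeasurableSet G)
    (h : ∀ x, ∀ S ⊆ T, k < S.card → (∀ i ∈ S, x ∈ A i) → x ∈ G) :
    ∑ i ∈ T, ν.real (A i) ≤ k + T.card * ν.real G := by
  classical
  have hint {s : Set α} (hs : MeasurableSet s) : Integrable (s.indicator (1 : α → ℝ)) ν :=
    (integrable_const 1).indicator hs
  have hpt (x : α) : ∑ i ∈ T, (A i).indicator (1 : α → ℝ) x ≤
      k + T.card * G.indicator (1 : α → ℝ) x := by
    have hsum : ∑ i ∈ T, (A i).indicator (1 : α → ℝ) x = (T.filter (x ∈ A ·)).card := by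
      simp [Set.indicator_apply]
    rw [hsum]
    by_cases hcard : k < (T.filter (x ∈ A ·)).card
    · have hx : x ∈ G :=
        h x _ (Finset.filter_subset _ _) hcard fun i hi ↦ (Finset.mem_filter.mp hi).2
      rw [Set.indicator_of_mem hx, Pi.one_apply, mul_one]
      exact_mod_cast (Finset.card_filter_le _ _).trans (Nat.le_add_left _ _)
    · have : 0 ≤ T.card * G.indicator (1 : α → ℝ) x :=
        mul_nonneg (Nat.cast_nonneg _) (Set.indicator_nonneg (fun _ _ ↦ zero_le_one) _)
      exact le_add_of_le_of_nonneg (by exact_mod_cast not_lt.mp hcard) this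
  have := integral_mono (integrable_finsetSum _ fun i _ ↦ hint (hA i))
    ((integrable_const (k : ℝ)).add ((hint hG).const_mul (T.card : ℝ))) hpt
  simpa only [Pi.add_apply, integral_finsetSum _ fun i _ ↦ hint (hA i),
    integral_add (integrable_const _) ((hint hG).const_mul _), integral_const_mul,
    integral_indicator_one (hA _), integral_indicator_one hG, integral_const, probReal_univ,
    one_smul] using this

lemma measureReal_prod_rotation_mem {E : Type*} [NormedAddCommGroup E] [NormedSpace ℝ E]
    [MeasurableSpace E] [BorelSpace E] [SecondCountableTopology E] [CompleteSpace E]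
    {μ : Measure E} [IsGaussian μ] (hμ : μ[id] = 0) (θ : ℝ) {A : Set E} (hA : MeasurableSet A) :
    (μ.prod μ).real {z | cos θ • z.1 + sin θ • z.2 ∈ A} = μ.real A := by
  have hpre : {z : E × E | cos θ • z.1 + sin θ • z.2 ∈ A} =
      (ContinuousLinearMap.rotation θ : E × E →L[ℝ] E × E) ⁻¹' (A ×ˢ Set.univ) := by
    ext z
    simp [ContinuousLinearMap.rotation_apply]
  rw [hpre, ← map_measureReal_apply (by fun_prop) (hA.prod .univ),
    IsGaussian.map_rotation_eq_self hμ, measureReal_prod_prod, probReal_univ, mul_one]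

variable {Ω : Type*} {mΩ : MeasurableSpace Ω} {P : Measure Ω} {X : Ω → ℝ} {q : ℕ}

/-- `X` is a polynomial of total degree at most `q` in finitely many jointly Gaussian variables.
Centering these variables is no restriction, since the means can be absorbed into the polynomial. -/
def IsGaussianPolynomial (q : ℕ) (X : Ω → ℝ) (P : Measure Ω) : Prop :=
  ∃ (n : ℕ) (Y : Ω → Fin n → ℝ) (p : MvPolynomial (Fin n) ℝ), HasGaussianLaw Y P ∧ P[Y] = 0 ∧
    p.totalDegree ≤ q ∧ ∀ ω, X ω = MvPolynomial.eval (Y ω) p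

lemma IsGaussianPolynomial.aemeasurable (hX : IsGaussianPolynomial q X P) : AEMeasurable X P := by
  obtain ⟨n, Y, p, hY, -, -, hXY⟩ := hX
  rw [funext hXY]
  exact p.continuous_eval.measurable.comp_aemeasurable hY.aemeasurable

lemma IsGaussianPolynomial.const_mul (hX : IsGaussianPolynomial q X P) (r : ℝ) :
    IsGaussianPolynomial q (fun ω ↦ r * X ω) P := by
  obtain ⟨n, Y, p, hY, hY₀, hp, hXY⟩ := hX
  refine ⟨n, Y, r • p, hY, hY₀, (MvPolynomial.totalDegree_smul_le r p).trans hp, fun ω ↦ ?_⟩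
  simp only [hXY, MvPolynomial.smul_eval]

theorem exists_forall_measureReal_abs_le_le_add_sq (q : ℕ) {ε : ℝ} (hε : 0 < ε) :
    ∃ C : ℝ, 0 ≤ C ∧ ∀ X : Ω → ℝ, IsGaussianPolynomial q X P → ∀ t : ℝ,
      P.real {ω | |X ω| ≤ t} ≤ ε + P.real {ω | |X ω| ≤ C * t} ^ 2 := by
  obtain ⟨N, hN⟩ := exists_nat_gt (2 * q / ε)
  have hN₀ : (0 : ℝ) < N := (by positivity : 0 ≤ 2 * q / ε).trans_lt hN
  obtain ⟨T, hT, hTN⟩ :=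
    (Set.Ioc_infinite (neg_lt_self pi_pos)).exists_subset_card_eq N
  obtain ⟨C, hC, hCT⟩ := exists_abs_eval_le_of_card_lt_rotations q hT
  refine ⟨C, hC, fun X ⟨n, Y, p, hY, hY₀, hp, hXY⟩ t ↦ ?_⟩
  set μ := P.map Y
  have := hY.isGaussian_map
  have hμ : μ[id] = 0 := by
    rwa [integral_map hY.aemeasurable aestronglyMeasurable_id]
  set A : ℝ → Set (Fin n → ℝ) := fun t ↦ {x | |MvPolynomial.eval x p| ≤ t}
  have hA (t : ℝ) : MeasurableSet (A t) :=
    measurableSet_le p.continuous_eval.abs.measurable measurable_const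
  have hlaw (t : ℝ) : P.real {ω | |X ω| ≤ t} = μ.real (A t) := by
    rw [map_measureReal_apply_of_aemeasurable hY.aemeasurable (hA t)]
    simp only [hXY]
    rfl
  have hcount := sum_measureReal_le_of_card_lt_imp_mem (ν := μ.prod μ) (T := T) (k := 2 * q)
    (A := fun θ ↦ {z | cos θ • z.1 + sin θ • z.2 ∈ A t}) (G := A (C * t) ×ˢ A (C * t))
    (fun θ ↦ (by fun_prop : Measurable fun z : (Fin n → ℝ) × (Fin n → ℝ) ↦
      cos θ • z.1 + sin θ • z.2) (hA t)) ((hA _).prod (hA _))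
    (fun z S hST hS hz ↦ hCT hp z.1 z.2 S hST hS t hz)
  simp only [measureReal_prod_rotation_mem hμ _ (hA t), Finset.sum_const, nsmul_eq_mul,
    measureReal_prod_prod, ← sq, hTN, ← hlaw] at hcount
  rw [div_lt_iff₀ hε] at hN
  push_cast at hcount
  exact le_of_mul_le_mul_left (by linarith) hN₀

theorem measureReal_le_zero_eq_zero_or_one [IsProbabilityMeasure P] {ι : Type*} {l : Filter ι}
    [l.NeBot] {X : ι → Ω → ℝ} (hX : ∀ i, IsGaussianPolynomial q (X i) P) {W : Ω → ℝ}
    (hW : AEMeasurable W P) (hXW : TendstoInMeasure P (fun i ω ↦ |X i ω|) l W) :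
    P.real {ω | W ω ≤ 0} = 0 ∨ P.real {ω | W ω ≤ 0} = 1 := by
  set p := P.real {ω | W ω ≤ 0}
  suffices hp : ∀ ε > 0, p ≤ p ^ 2 + ε by
    have hp' : p * (1 - p) ≤ 0 := by linarith [le_of_forall_pos_le_add hp]
    have hp₀ : 0 ≤ p := measureReal_nonneg
    have hp₁ : 0 ≤ 1 - p := sub_nonneg.mpr measureReal_le_one
    refine (mul_eq_zero.mp (hp'.antisymm (mul_nonneg hp₀ hp₁))).imp id fun h ↦ ?_
    linarith
  intro ε hε
  obtain ⟨C, hC, hCX⟩ := exists_forall_measureReal_abs_le_le_add_sq (P := P) q hε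
  have hW₁ : ∀ t > 0, p ≤ P.real {ω | W ω ≤ (C + 1) * t} ^ 2 + ε := fun t ht ↦ by
    have hclose := tendstoInMeasure_iff_measureReal_norm.mp hXW t ht
    set δ : ι → ℝ := fun i ↦ P.real {ω | t ≤ ‖|X i ω| - W ω‖}
    have hstep (i : ι) : p ≤ (P.real {ω | W ω ≤ (C + 1) * t} + δ i) ^ 2 + ε + δ i := by
      have h₁ : p ≤ P.real {ω | |X i ω| ≤ t} + δ i := by
        simpa only [zero_add, norm_sub_rev (W _)] using
          measureReal_le_le_add (P := P) W (fun ω ↦ |X i ω|) 0 t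
      have h₂ : P.real {ω | |X i ω| ≤ C * t} ≤ P.real {ω | W ω ≤ (C + 1) * t} + δ i := by
        simpa only [add_one_mul] using
          measureReal_le_le_add (P := P) (fun ω ↦ |X i ω|) W (C * t) t
      linarith [hCX (X i) (hX i) t, pow_le_pow_left₀ measureReal_nonneg h₂ 2]
    have hlim := (((hclose.const_add (P.real {ω | W ω ≤ (C + 1) * t})).pow 2).add_const ε).add
      hclose
    rw [add_zero, add_zero] at hlim
    exact ge_of_tendsto' hlim hstep
  have hscale := tendsto_const_mul_nhdsGT_zero (by positivity : 0 < C + 1)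
  exact ge_of_tendsto ((((tendsto_measureReal_le_nhdsGT hW 0).comp hscale).pow 2).add_const ε)
    (eventually_mem_nhdsWithin.mono hW₁)

end GaussianPolynomials

section Convergence

variable {Ω : Type*} {mΩ : MeasurableSpace Ω} {P : Measure Ω} {q : ℕ} {Z : Ω → ℝ}

lemma memLp_two_abs_of_integrable_sq (hZ : Integrable (fun ω ↦ Z ω ^ 2) P) :
    MemLp (fun ω ↦ |Z ω|) 2 P := by
  have hmeas : AEMeasurable (fun ω ↦ |Z ω|) P := by
    simpa only [sqrt_sq_eq_abs] using hZ.aemeasurable.sqrt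
  rw [memLp_two_iff_integrable_sq hmeas.aestronglyMeasurable]
  simpa only [sq_abs] using hZ

lemma tendsto_eLpNorm_abs_sub_abs {ι : Type*} {l : Filter ι} {X : ι → Ω → ℝ} {p : ℝ≥0∞}
    (hXZ : Tendsto (fun i ↦ eLpNorm (fun ω ↦ X i ω - Z ω) p P) l (𝓝 0)) :
    Tendsto (fun i ↦ eLpNorm ((fun ω ↦ |X i ω|) - fun ω ↦ |Z ω|) p P) l (𝓝 0) :=
  tendsto_of_tendsto_of_tendsto_of_le_of_le tendsto_const_nhds hXZ (fun _ ↦ zero_le)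
    fun _ ↦ eLpNorm_mono fun _ ↦ abs_abs_sub_abs_le_abs_sub _ _

lemma measureReal_abs_le_zero_lt_one [IsProbabilityMeasure P] (hZ : ∫ ω, Z ω ^ 2 ∂P ≠ 0) :
    P.real {ω | |Z ω| ≤ 0} < 1 := by
  refine measureReal_le_one.lt_of_ne fun h ↦ hZ ?_
  have hmeas :=
    (memLp_two_abs_of_integrable_sq (not_imp_comm.mp integral_undef hZ)).1.aemeasurable
  have hZ₀ : ∀ᵐ ω ∂P, |Z ω| ≤ 0 :=
    (mem_ae_iff_prob_eq_one₀ (nullMeasurableSet_le hmeas aemeasurable_const)).mpr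
      ((ENNReal.toReal_eq_one_iff _).mp h)
  exact integral_eq_zero_of_ae (hZ₀.mono fun ω hω ↦ by simpa using hω)

theorem stmt_5_general [IsProbabilityMeasure P] {X : ℕ → Ω → ℝ}
    (hX : ∀ n, IsGaussianPolynomial q (X n) P) (hZ : ∫ ω, Z ω ^ 2 ∂P ≠ 0)
    (hXZ : Tendsto (fun n ↦ eLpNorm (fun ω ↦ X n ω - Z ω) 2 P) atTop (𝓝 0))
    {d c : ℝ} (hd : 0 < d) (hc : 0 < c) :
    Tendsto (fun ε ↦ 1 / -log (c * ε) *
        (∑' n : ℕ, 1 / ((n : ℝ) + 1) * P.real {ω | c * ε * ((n : ℝ) + 1) ^ d < |X (n + 1) ω|} -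
          ∑' n : ℕ, 1 / ((n : ℝ) + 1) * P.real {ω | c * ε * ((n : ℝ) + 1) ^ d < |Z ω|}))
      (𝓝[>] 0) (𝓝 0) := by
  have hZ₂ : MemLp (fun ω ↦ |Z ω|) 2 P :=
    memLp_two_abs_of_integrable_sq (not_imp_comm.mp integral_undef hZ)
  have hX₂ (n : ℕ) : AEStronglyMeasurable (fun ω ↦ |X n ω|) P :=
    (hX n).aemeasurable.abs.aestronglyMeasurable
  have habs := tendsto_eLpNorm_abs_sub_abs hXZ
  have hno_atom : P.real {ω | |Z ω| ≤ 0} = 0 :=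
    (measureReal_le_zero_eq_zero_or_one hX hZ₂.1.aemeasurable
      (tendstoInMeasure_of_tendsto_eLpNorm two_ne_zero hX₂ hZ₂.1 habs)).resolve_right
      (measureReal_abs_le_zero_lt_one hZ).ne
  have hlog := isLittleO_tsum_measureReal_lt_sub_tsum_log hd (fun n ↦ hX₂ (n + 1)) hZ₂
    (habs.comp (tendsto_add_atTop_nat 1)) hno_atom
  have hlim := (hlog.tendsto_div_nhds_zero.comp (tendsto_const_mul_nhdsGT_zero hc)).neg
  rw [neg_zero] at hlim
  refine hlim.congr fun ε ↦ ?_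
  rw [Function.comp_apply, one_div_mul_eq_div, div_neg]

end Convergence

section HermiteVariation

lemma totalDegree_aeval_le_natDegree {R σ : Type*} [CommRing R] {L : MvPolynomial σ R}
    (hL : L.totalDegree ≤ 1) (p : Polynomial ℤ) :
    (Polynomial.aeval L p).totalDegree ≤ p.natDegree := by
  rw [Polynomial.aeval_eq_sum_range]
  refine MvPolynomial.totalDegree_finsetSum_le fun i hi ↦ ?_
  calc (p.coeff i • L ^ i).totalDegree ≤ (L ^ i).totalDegree := by
        rw [← Int.cast_smul_eq_zsmul R]
        exact MvPolynomial.totalDegree_smul_le _ _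
    _ ≤ i * L.totalDegree := MvPolynomial.totalDegree_pow _ _
    _ ≤ i * 1 := Nat.mul_le_mul_left i hL
    _ ≤ p.natDegree := by simpa using Finset.mem_range_succ_iff.mp hi

lemma hasGaussianLaw_of_forall_map_sum_mul_eq_gaussianReal {Ω ι : Type*} {mΩ : MeasurableSpace Ω}
    {P : Measure Ω} [Fintype ι] {Y : Ω → ι → ℝ} (hY : AEMeasurable Y P)
    (h : ∀ c : ι → ℝ, ∃ m v, P.map (fun ω ↦ ∑ i, c i * Y ω i) = gaussianReal m v) :
    HasGaussianLaw Y P := by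
  classical
  refine ⟨isGaussian_of_map_eq_gaussianReal fun L ↦ ?_⟩
  obtain ⟨m, v, hmv⟩ := h fun i ↦ L fun j ↦ if i = j then 1 else 0
  refine ⟨m, v, ?_⟩
  rw [AEMeasurable.map_map_of_aemeasurable L.continuous.measurable.aemeasurable hY, ← hmv]
  congr 1 with ω
  simpa [mul_comm] using L.toLinearMap.pi_apply_eq_sum_univ (Y ω)

variable {Ω : Type*} [MeasureSpace Ω] {B : ℝ → Ω → ℝ} {H : ℝ}

lemma IsFractionalBrownianMotion.hasGaussianLaw_s5 (hB : IsFractionalBrownianMotion B H) {n : ℕ}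
    {t : Fin n → ℝ} (ht : ∀ i, 0 ≤ t i) : HasGaussianLaw (fun ω i ↦ B (t i) ω) ℙ :=
  hasGaussianLaw_of_forall_map_sum_mul_eq_gaussianReal
    (measurable_pi_lambda _ fun i ↦ hB.measurable (t i)).aemeasurable
    fun c ↦ ⟨0, hB.gaussian_fdd n t ht c⟩

lemma IsFractionalBrownianMotion.integral_eq_zero_s5 (hB : IsFractionalBrownianMotion B H) {t : ℝ}
    (ht : 0 ≤ t) : ∫ ω, B t ω ∂(ℙ : Measure Ω) = 0 := by
  obtain ⟨v, hv⟩ := hB.gaussian_fdd 1 (fun _ ↦ t) (fun _ ↦ ht) 1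
  simp only [Finset.univ_unique, Finset.sum_singleton, Pi.one_apply, one_mul] at hv
  calc ∫ ω, B t ω ∂(ℙ : Measure Ω) = ∫ x, x ∂(Measure.map (B t) ℙ) :=
        (integral_map (hB.measurable t).aemeasurable aestronglyMeasurable_id).symm
    _ = 0 := by rw [hv, integral_id_gaussianReal]

lemma IsFractionalBrownianMotion.isGaussianPolynomial_hermiteVariation
    (hB : IsFractionalBrownianMotion B H) (q n : ℕ) :
    IsGaussianPolynomial q (hermiteVariation B H q n) ℙ := by
  let t (i : Fin (n + 1)) : ℝ := i / n
  have ht (i : Fin (n + 1)) : 0 ≤ t i := by positivity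
  have hlaw := hB.hasGaussianLaw_s5 ht
  let L (k : Fin n) : MvPolynomial (Fin (n + 1)) ℝ :=
    (n : ℝ) ^ H • (MvPolynomial.X k.succ - MvPolynomial.X k.castSucc)
  have hL (k : Fin n) : (L k).totalDegree ≤ 1 :=
    (MvPolynomial.totalDegree_smul_le _ _).trans
      ((MvPolynomial.totalDegree_sub _ _).trans (by simp))
  refine ⟨n + 1, fun ω i ↦ B (t i) ω, ∑ k, Polynomial.aeval (L k) (Polynomial.hermite q), hlaw,
    ?_, ?_, fun ω ↦ ?_⟩
  · ext i
    rw [eval_integral fun i ↦ (hlaw.eval i).integrable, hB.integral_eq_zero_s5 (ht i), Pi.zero_apply]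
  · exact MvPolynomial.totalDegree_finsetSum_le fun k _ ↦
      (totalDegree_aeval_le_natDegree (hL k) _).trans_eq Polynomial.natDegree_hermite
  · rw [hermiteVariation, Finset.sum_range, map_sum]
    refine Finset.sum_congr rfl fun k _ ↦ ?_
    rw [Polynomial.aeval_def, Polynomial.aeval_def, Polynomial.hom_eval₂,
      RingHom.ext_int ((MvPolynomial.eval _).comp _) (algebraMap ℤ ℝ)]
    simp [L, t]

end HermiteVariation

theorem stmt_5 {Ω : Type*} [MeasureSpace Ω] [IsProbabilityMeasure (ℙ : Measure Ω)]
    (q : ℕ) (hq : 2 ≤ q) (H : ℝ) (hH0 : 1 - 1 / (2 * q) < H) (hH1 : H < 1)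
    (B : ℝ → Ω → ℝ) (hB : IsFractionalBrownianMotion B H)
    (c₂ : ℝ) (hc₂ : 0 < c₂) (Z : Ω → ℝ)
    (hZvar : (∫ ω, (Z ω) ^ 2 ∂(ℙ : Measure Ω)) = 1)
    (hconv : Tendsto
      (fun n : ℕ => eLpNorm
        (fun ω => hermiteVariation B H q n ω / (c₂ * (n : ℝ) ^ (1 - q * (1 - H))) - Z ω)
        2 (ℙ : Measure Ω))
      atTop (𝓝 0))
    (c : ℝ) (hc : 0 < c) :
    Tendsto
      (fun ε : ℝ =>
        (1 / (-Real.log (c * ε))) *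
          ((∑' n : ℕ, (1 / ((n : ℝ) + 1)) *
              (ℙ {ω | c * ε * ((n : ℝ) + 1) ^ (1 - q * (1 - H)) <
                |hermiteVariation B H q (n + 1) ω /
                  (c₂ * ((n : ℝ) + 1) ^ (1 - q * (1 - H)))|}).toReal) -
            ∑' n : ℕ, (1 / ((n : ℝ) + 1)) *
              (ℙ {ω | c * ε * ((n : ℝ) + 1) ^ (1 - q * (1 - H)) < |Z ω|}).toReal))
      (𝓝[>] 0) (𝓝 0) := by
  have hq₀ : (0 : ℝ) < q := by positivity
  have hd : 0 < 1 - q * (1 - H) := by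
    have : q * (1 - H) < q * (1 / (2 * q)) := mul_lt_mul_of_pos_left (by linarith) hq₀
    have : (q : ℝ) * (1 / (2 * q)) = 1 / 2 := by field_simp
    linarith
  have hX (n : ℕ) : IsGaussianPolynomial q
      (fun ω ↦ hermiteVariation B H q n ω / (c₂ * (n : ℝ) ^ (1 - q * (1 - H)))) ℙ := by
    simpa only [inv_mul_eq_div] using (hB.isGaussianPolynomial_hermiteVariation q n).const_mul
      (c₂ * (n : ℝ) ^ (1 - q * (1 - H)))⁻¹
  simpa only [measureReal_def, Nat.cast_add, Nat.cast_one] using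
    stmt_5_general hX (hZvar ▸ one_ne_zero) hconv hd hc
end
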